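/- arXiv:1906.00907 — 2 statements merged into one kernel-verified Lean document; each statement's English description precedes it below -/
import Mathlib

section
/- Let n be a positive even integer and z ∈ I^FPF_n. For a subset S = {(a_1,b_1),…,(a_l,b_l)} ⊆ [n]×[n] listed so that a_1 ≤ a_2 ≤ ⋯ ≤ a_l and b_k > b_{k+1} whenever a_k = a_{k+1}, set δ(S) = (b_1 + a_1 − 1, b_2 + a_2 − 1, …, b_l + a_l − 1) and x^S = x_{a_1} x_{a_2} ⋯ x_{a_l}. Then 𝔊^Sp_z = Σ_S β^{|S| − ℓ_fpf(z)} x^S, the sum over all subsets S ⊆ [n]×[n] such that δ(S) is a symplectic Hecke word for z. -/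
open MvPolynomial

noncomputable section

/-- The coefficient ring `ℤ[β]`. -/
abbrev Rb : Type := Polynomial ℤ

/-- The indeterminate `β`. -/
def bb : Rb := Polynomial.X

/-- The order-reversing permutation `n⋯321`, i.e. `i ↦ n+1-i` in 1-indexed notation. -/
def revPerm (n : ℕ) : Equiv.Perm (Fin n) :=
  ⟨Fin.rev, Fin.rev, fun i => Fin.rev_rev i, fun i => Fin.rev_rev i⟩

/-- `z` is a fixed-point-free involution. -/
def IsFPF {n : ℕ} (z : Equiv.Perm (Fin n)) : Prop :=
  z * z = 1 ∧ ∀ i, z i ≠ i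

/-- `x_i + x_j + β x_i x_j`. -/
def oplus {n : ℕ} (i j : Fin n) : MvPolynomial (Fin n) Rb :=
  X i + X j + C bb * (X i * X j)

/-- `IsDivDiffB i j f g` encodes `∂_i^{(β)} f = g` where `j = i+1`:
`∂_i^{(β)} f = ((1+βx_j) f - s_i((1+βx_j) f)) / (x_i - x_j)`, stated multiplicatively
(the quotient is exact, and `g` is uniquely determined since the ring is a domain). -/
def IsDivDiffB {n : ℕ} (i j : Fin n) (f g : MvPolynomial (Fin n) Rb) : Prop :=
  (X i - X j) * g =
    (1 + C bb * X j) * f - rename ⇑(Equiv.swap i j) ((1 + C bb * X j) * f)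

/-- `∏_{1 ≤ i < j ≤ n-i} (x_i + x_j + β x_i x_j)` (variables 0-indexed). -/
def spTop (n : ℕ) : MvPolynomial (Fin n) Rb :=
  ∏ p ∈ Finset.univ.filter
      (fun p : Fin n × Fin n => p.1 < p.2 ∧ (p.1 : ℕ) + (p.2 : ℕ) + 2 ≤ n),
    oplus p.1 p.2

/-- `x_1^{n-1} x_2^{n-2} ⋯ x_{n-1}^1` (variables 0-indexed). -/
def grTop (n : ℕ) : MvPolynomial (Fin n) Rb :=
  ∏ a : Fin n, X a ^ (n - 1 - (a : ℕ))

/-- The defining property of the family of symplectic Grothendieck polynomials. -/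
def IsSpFam (n : ℕ) (G : Equiv.Perm (Fin n) → MvPolynomial (Fin n) Rb) : Prop :=
  G (revPerm n) = spTop n ∧
    ∀ z : Equiv.Perm (Fin n), IsFPF z →
      ∀ i j : Fin n, (j : ℕ) = (i : ℕ) + 1 →
        z i ≠ j → z j ≠ i → z j < z i →
          IsDivDiffB i j (G z) (G (Equiv.swap i j * z * Equiv.swap i j))

/-- The defining property of the family of Grothendieck polynomials. -/
def IsGrothFam (n : ℕ) (G : Equiv.Perm (Fin n) → MvPolynomial (Fin n) Rb) : Prop :=
  G (revPerm n) = grTop n ∧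
    ∀ (w : Equiv.Perm (Fin n)) (i j : Fin n), (j : ℕ) = (i : ℕ) + 1 →
      w j < w i → IsDivDiffB i j (G w) (G (w * Equiv.swap i j))

/-- The length (number of inversions) of a permutation. -/
def invLen {n : ℕ} (w : Equiv.Perm (Fin n)) : ℕ :=
  (Finset.univ.filter (fun p : Fin n × Fin n => p.1 < p.2 ∧ w p.2 < w p.1)).card

/-- The fixed-point-free involution length `ℓ_fpf(z) = #{(i,j) : z(i) > z(j) < i < j}`. -/
def fpfLen {n : ℕ} (z : Equiv.Perm (Fin n)) : ℕ :=
  (Finset.univ.filter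
      (fun p : Fin n × Fin n => z p.2 < z p.1 ∧ z p.2 < p.1 ∧ p.1 < p.2)).card

/-- The underlying function of `Θ = (1,2)(3,4)⋯(n-1,n)`. -/
def thetaFun (n : ℕ) (hn : n % 2 = 0) (i : Fin n) : Fin n :=
  ⟨if (i : ℕ) % 2 = 0 then (i : ℕ) + 1 else (i : ℕ) - 1, by
    have hi := i.isLt
    split_ifs with h <;> omega⟩

/-- The fixed-point-free involution `Θ = (1,2)(3,4)⋯(n-1,n)`. -/
def theta (n : ℕ) (hn : n % 2 = 0) : Equiv.Perm (Fin n) :=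
  Function.Involutive.toPerm (thetaFun n hn) (by
    intro i
    have hi := i.isLt
    apply Fin.ext
    simp only [thetaFun]
    split_ifs <;> omega)

/-- One step of the partial Hecke action: `heckeStep a z = some (z · s_{a+1})` when defined,
with `a` a 0-indexed letter (so `a` corresponds to the simple transposition of `a+1, a+2`
in 1-indexed notation). -/
def heckeStep {n : ℕ} (a : ℕ) (z : Equiv.Perm (Fin n)) : Option (Equiv.Perm (Fin n)) :=
  if h : a + 1 < n then
    let i : Fin n := ⟨a, Nat.lt_of_succ_lt h⟩
    let j : Fin n := ⟨a + 1, h⟩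
    if z i < z j then some (Equiv.swap i j * z * Equiv.swap i j)
    else if z i = j ∧ z j = i then none
    else if z i ≠ j ∧ z j ≠ i ∧ z j < z i then some z
    else none
  else none

/-- Apply a word of (0-indexed) letters to `z` via the partial Hecke action. -/
def heckeApply {n : ℕ} (l : List ℕ) (z : Equiv.Perm (Fin n)) :
    Option (Equiv.Perm (Fin n)) :=
  l.foldl (fun o a => o.bind (heckeStep a)) (some z)

/-- The simple transposition corresponding to the 0-indexed letter `a`. -/
def swapAt (n : ℕ) (a : ℕ) : Equiv.Perm (Fin n) :=
  if h : a + 1 < n then Equiv.swap ⟨a, Nat.lt_of_succ_lt h⟩ ⟨a + 1, h⟩ else 1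

/-- The permutation `s_{i_1} s_{i_2} ⋯ s_{i_l}` of a word. -/
def wordToPerm (n : ℕ) (l : List ℕ) : Equiv.Perm (Fin n) := (l.map (swapAt n)).prod

/-- `l` is a reduced word for `w`. -/
def IsReducedWord (n : ℕ) (w : Equiv.Perm (Fin n)) (l : List ℕ) : Prop :=
  (∀ a ∈ l, a + 1 < n) ∧ wordToPerm n l = w ∧ l.length = invLen w

/-- The set of Hecke atoms `B_fpf(z)`. -/
def Bfpf (n : ℕ) (hn : n % 2 = 0) (z : Equiv.Perm (Fin n)) :
    Finset (Equiv.Perm (Fin n)) :=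
  @Finset.filter _
    (fun w => ∃ l : List ℕ, IsReducedWord n w l ∧ heckeApply l (theta n hn) = some z)
    (Classical.decPred _) Finset.univ

/-- `extPerm z w` is the permutation `z × w` acting on the first `m` letters by `z`
and the last `n` letters by `w`. -/
def extPerm {m n : ℕ} (z : Equiv.Perm (Fin m)) (w : Equiv.Perm (Fin n)) :
    Equiv.Perm (Fin (m + n)) :=
  finSumFinEquiv.symm.trans ((Equiv.sumCongr z w).trans finSumFinEquiv)

/-- `rank(z_{[i][j]}) = #{k ∈ [j] : z(k) ≤ i}` (1-indexed sizes `i, j`). -/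
def permRank {n : ℕ} (z : Equiv.Perm (Fin n)) (i j : ℕ) : ℕ :=
  (Finset.univ.filter (fun k : Fin n => (k : ℕ) < j ∧ ((z k : Fin n) : ℕ) < i)).card

/-- The rank of the upper-left `i × j` corner of `A` (1-indexed sizes `i, j ≤ n`). -/
def cornerRank {n : ℕ} (A : Matrix (Fin n) (Fin n) ℂ) (i j : ℕ) : ℕ :=
  Matrix.rank (Matrix.of fun (a : Fin (min i n)) (b : Fin (min j n)) =>
    A ⟨(a : ℕ), lt_of_lt_of_le a.isLt (min_le_right i n)⟩
      ⟨(b : ℕ), lt_of_lt_of_le b.isLt (min_le_right j n)⟩)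

/-- The orthogonal Rothe diagram `D^O(z) = {(i, z(j)) : z(i) > z(j) ≤ i < j}` (0-indexed). -/
def DO (n : ℕ) (z : Equiv.Perm (Fin n)) : Finset (Fin n × Fin n) :=
  Finset.image (fun p : Fin n × Fin n => (p.1, z p.2))
    (Finset.univ.filter (fun p : Fin n × Fin n => z p.2 < z p.1 ∧ z p.2 ≤ p.1 ∧ p.1 < p.2))

/-- The symplectic Rothe diagram `D^Sp(z) = {(i, z(j)) : z(i) > z(j) < i < j}` (0-indexed). -/
def DSp (n : ℕ) (z : Equiv.Perm (Fin n)) : Finset (Fin n × Fin n) :=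
  Finset.image (fun p : Fin n × Fin n => (p.1, z p.2))
    (Finset.univ.filter (fun p : Fin n × Fin n => z p.2 < z p.1 ∧ z p.2 < p.1 ∧ p.1 < p.2))

/-- The essential set `Ess(D) = {(i,j) ∈ D : (i,j+1) ∉ D and (i+1,j) ∉ D}`. -/
def Ess {n : ℕ} (D : Finset (Fin n × Fin n)) : Finset (Fin n × Fin n) :=
  D.filter (fun p =>
    (∀ q ∈ D, ¬(q.1 = p.1 ∧ (q.2 : ℕ) = (p.2 : ℕ) + 1)) ∧
    (∀ q ∈ D, ¬((q.1 : ℕ) = (p.1 : ℕ) + 1 ∧ q.2 = p.2)))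

/-- A permutation is vexillary if it avoids the pattern 2143. -/
def Vexillary {n : ℕ} (z : Equiv.Perm (Fin n)) : Prop :=
  ¬ ∃ i j k l : Fin n, i < j ∧ j < k ∧ k < l ∧ z j < z i ∧ z i < z l ∧ z l < z k

/-- The ideal of `ℤ[x_1,…,x_N]` generated by symmetric polynomials with zero constant term. -/
def ILambda (N : ℕ) : Ideal (MvPolynomial (Fin N) ℤ) :=
  Ideal.span {f : MvPolynomial (Fin N) ℤ |
    (∀ σ : Equiv.Perm (Fin N), rename (⇑σ) f = f) ∧ coeff 0 f = 0}

/-- Substitute `x_j = 0` for all `j > n`, producing a polynomial in `x_1,…,x_n`. -/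
def truncVars (n N : ℕ) (f : MvPolynomial (Fin N) Rb) : MvPolynomial (Fin n) Rb :=
  aeval (fun i : Fin N => if h : (i : ℕ) < n then X ⟨(i : ℕ), h⟩ else 0) f

/-- The order used to list the elements of a pipe-dream subset `S`:
rows weakly increasing, columns strictly decreasing within a row. -/
def rowOrder {n : ℕ} (p q : Fin n × Fin n) : Prop :=
  p.1 < q.1 ∨ (p.1 = q.1 ∧ q.2 < p.2)

/-- `δ(S)` is a symplectic Hecke word for `z` (with Hecke words computed from `Θ`);
here `L` is the listing of `S` in the order `rowOrder`, and `(a,b) ∈ S` (0-indexed)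
contributes the 0-indexed letter `a + b`, i.e. the 1-indexed letter `(b+1)+(a+1)-1`. -/
def DeltaHeckeWord (n : ℕ) (hn : n % 2 = 0) (z : Equiv.Perm (Fin n))
    (S : Finset (Fin n × Fin n)) : Prop :=
  ∃ L : List (Fin n × Fin n), L.toFinset = S ∧ L.Chain' rowOrder ∧
    heckeApply (L.map (fun p => (p.1 : ℕ) + (p.2 : ℕ))) (theta n hn) = some z


section SpAlg

variable {R E : Type*} [CommRing R] [Ring E] [Algebra R E]

/-- Relations of the id-Coxeter algebra with parameter `b`, generators killed from `N` on. -/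
structure SpRel (b : R) (u : ℕ → E) (N : ℕ) : Prop where
  sq : ∀ c, u c * u c = b • u c
  comm : ∀ c d, c + 2 ≤ d → u c * u d = u d * u c
  braid : ∀ c, u c * (u (c + 1) * u c) = u (c + 1) * (u c * u (c + 1))
  zero : ∀ c, N ≤ c → u c = 0

def spH (u : ℕ → E) (c : ℕ) (x : R) : E := 1 + x • u c

def spUp (u : ℕ → E) (x : R) : ℕ → ℕ → E
  | _, 0 => 1
  | a, m + 1 => spH u a x * spUp u x (a + 1) m

def spDn (u : ℕ → E) (x : R) : ℕ → ℕ → E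
  | _, 0 => 1
  | a, m + 1 => spDn u x (a + 1) m * spH u a x

def spT (u : ℕ → E) (N a : ℕ) (x : R) : E := spUp u x a (N - a)
def spB (u : ℕ → E) (N a : ℕ) (x : R) : E := spDn u x a (N - a)

variable {b : R} {u : ℕ → E} {N : ℕ}

theorem spH_one (h : SpRel b u N) {c : ℕ} (hc : N ≤ c) (x : R) : spH u c x = 1 := by
  simp [spH, h.zero c hc]

theorem spT_one {a : ℕ} (ha : N ≤ a) (x : R) : spT u N a x = 1 := by
  simp [spT, Nat.sub_eq_zero_of_le ha, spUp]

theorem spB_one {a : ℕ} (ha : N ≤ a) (x : R) : spB u N a x = 1 := by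
  simp [spB, Nat.sub_eq_zero_of_le ha, spDn]

theorem spT_rec (h : SpRel b u N) (a : ℕ) (x : R) :
    spT u N a x = spH u a x * spT u N (a + 1) x := by
  rcases lt_or_ge a N with ha | ha
  · obtain ⟨m, hm⟩ : ∃ m, N - a = m + 1 := ⟨N - a - 1, by omega⟩
    have : N - (a + 1) = m := by omega
    simp [spT, hm, this, spUp]
  · rw [spT_one ha, spT_one (by omega), spH_one h ha, one_mul]

theorem spB_rec (h : SpRel b u N) (a : ℕ) (x : R) :
    spB u N a x = spB u N (a + 1) x * spH u a x := by
  rcases lt_or_ge a N with ha | ha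
  · obtain ⟨m, hm⟩ : ∃ m, N - a = m + 1 := ⟨N - a - 1, by omega⟩
    have : N - (a + 1) = m := by omega
    simp [spB, hm, this, spDn]
  · rw [spB_one ha, spB_one (by omega), spH_one h ha, one_mul]

theorem spUp_eq_T (h : SpRel b u N) (x : R) (m : ℕ) : ∀ a, N ≤ a + m →
    spUp u x a m = spT u N a x := by
  induction m with
  | zero => intro a ha; rw [spT_one (by omega)]; rfl
  | succ m ih =>
    intro a ha
    rw [spT_rec h, ← ih (a + 1) (by omega)]; rfl

/-- Downward induction. -/
theorem spDown (N : ℕ) {p : ℕ → Prop} (h0 : ∀ a, N ≤ a → p a)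
    (hs : ∀ a, p (a + 1) → p a) (a : ℕ) : p a := by
  induction hk : N - a generalizing a with
  | zero => exact h0 a (by omega)
  | succ k ih => exact hs a (ih (a + 1) (by omega))

theorem spH_comm (h : SpRel b u N) {c d : ℕ} (hcd : c + 2 ≤ d) (x y : R) :
    Commute (spH u c x) (spH u d y) := by
  have : Commute (u c) (u d) := h.comm c d hcd
  unfold spH
  exact (Commute.one_left _).add_left
    ((Commute.one_right _).add_right ((this.smul_left x).smul_right y))

theorem spT_comm_of (h : SpRel b u N) (x : R) {e : E} : ∀ a,
    (∀ d, a ≤ d → Commute e (spH u d x)) → Commute e (spT u N a x) := by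
  refine spDown N ?_ ?_
  · intro a ha _; rw [spT_one ha]; exact Commute.one_right _
  · intro a ih hc
    rw [spT_rec h]
    exact (hc a le_rfl).mul_right (ih fun d hd => hc d (by omega))

theorem spB_comm_of (h : SpRel b u N) (x : R) {e : E} : ∀ a,
    (∀ d, a ≤ d → Commute e (spH u d x)) → Commute e (spB u N a x) := by
  refine spDown N ?_ ?_
  · intro a ha _; rw [spB_one ha]; exact Commute.one_right _
  · intro a ih hc
    rw [spB_rec h]
    exact (ih fun d hd => hc d (by omega)).mul_right (hc a le_rfl)

theorem spT_commH (h : SpRel b u N) {c a : ℕ} (hca : c + 2 ≤ a) (x y : R) :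
    Commute (spH u c x) (spT u N a y) :=
  spT_comm_of h y a fun d hd => spH_comm h (by omega) x y

theorem spB_commH (h : SpRel b u N) {c a : ℕ} (hca : c + 2 ≤ a) (x y : R) :
    Commute (spH u c x) (spB u N a y) :=
  spB_comm_of h y a fun d hd => spH_comm h (by omega) x y

theorem spT_commU (h : SpRel b u N) {c a : ℕ} (hca : c + 2 ≤ a) (y : R) :
    Commute (u c) (spT u N a y) :=
  spT_comm_of h y a fun d hd => by
    have : Commute (u c) (u d) := h.comm c d (by omega)
    exact (Commute.one_right _).add_right (this.smul_right y)

theorem spYBE (h : SpRel b u N) (c : ℕ) (x y : R) :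
    spH u c x * spH u (c + 1) (y + x + b * (y * x)) * spH u c y =
      spH u (c + 1) y * spH u c (y + x + b * (y * x)) * spH u (c + 1) x := by
  simp only [spH, mul_add, add_mul, mul_one, one_mul, smul_mul_assoc, mul_smul_comm, smul_add,
    smul_smul, mul_assoc, h.sq, h.braid]
  module

/-- Exchange of an ascending and a descending product. -/
theorem spTB (h : SpRel b u N) (x w : R) : ∀ a,
    spT u N a w * spB u N a x =
      spB u N (a + 1) x * spH u a (x + w + b * (x * w)) * spT u N (a + 1) w := by
  refine spDown N ?_ ?_
  · intro a ha
    rw [spT_one ha, spB_one ha, spB_one (by omega), spT_one (by omega), spH_one h ha]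
    simp
  · intro a ih
    have e1 := (spB_commH h (show a + 2 ≤ a + 1 + 1 by omega) w x).eq
    have e2 := (spT_commH h (show a + 2 ≤ a + 1 + 1 by omega) x w).eq
    have e3 := spYBE h a w x
    calc spT u N a w * spB u N a x
        = spH u a w * (spT u N (a + 1) w * spB u N (a + 1) x) * spH u a x := by
          rw [spT_rec h a, spB_rec h a]; simp only [mul_assoc]
      _ = (spH u a w * spB u N (a + 1 + 1) x) * spH u (a + 1) (x + w + b * (x * w)) *
            (spT u N (a + 1 + 1) w * spH u a x) := by rw [ih]; simp only [mul_assoc]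
      _ = spB u N (a + 1 + 1) x * (spH u a w * spH u (a + 1) (x + w + b * (x * w)) *
            spH u a x) * spT u N (a + 1 + 1) w := by rw [e1, ← e2]; simp only [mul_assoc]
      _ = _ := by
          rw [e3, spB_rec h (a + 1), spT_rec h (a + 1)]; simp only [mul_assoc]

theorem spSymAux (h : SpRel b u N) (a : ℕ) (x y : R) :
    (x - y) • ((u a - b • 1) * (spH u (a + 1) y * spH u a x)) =
      (1 + b * y) • (spH u (a + 1) y * spH u a x) -
       spH u (a + 1) x * spH u a y * ((1 + b * y) • 1 - (x - y) • (u (a + 1) - b • 1)) := by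
  simp only [spH, mul_add, add_mul, mul_sub, sub_mul, mul_one, one_mul, smul_mul_assoc,
    mul_smul_comm, smul_add, smul_sub, smul_smul, mul_assoc, h.sq, h.braid]
  module

theorem spSym (h : SpRel b u N) (x y : R) : ∀ a,
    (x - y) • ((u a - b • 1) * (spT u N (a + 1) y * spT u N a x)) =
      (1 + b * y) • (spT u N (a + 1) y * spT u N a x) -
      (1 + b * x) • (spT u N (a + 1) x * spT u N a y) := by
  refine spDown N ?_ ?_
  · intro a ha
    rw [spT_one ha, spT_one ha, spT_one (by omega), spT_one (by omega), h.zero a ha]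
    simp only [mul_one, zero_sub, smul_neg, smul_smul]
    module
  · intro a ih
    have e : ∀ x y : R, spT u N (a + 1) y * spT u N a x =
        spH u (a + 1) y * spH u a x * (spT u N (a + 1 + 1) y * spT u N (a + 1) x) := by
      intro x y
      have e2 := (spT_commH h (show a + 2 ≤ a + 1 + 1 by omega) x y).eq
      rw [spT_rec h a, spT_rec h (a + 1) y]
      calc _ = spH u (a + 1) y * (spT u N (a + 1 + 1) y * spH u a x) * spT u N (a + 1) x := by
            simp only [mul_assoc]
        _ = _ := by rw [← e2]; simp only [mul_assoc]
    rw [e x y, e y x]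
    set Z := spT u N (a + 1 + 1) y * spT u N (a + 1) x
    set Z' := spT u N (a + 1 + 1) x * spT u N (a + 1) y
    have ih' : (1 + b * x) • Z' = ((1 + b * y) • 1 - (x - y) • (u (a + 1) - b • 1)) * Z := by
      rw [sub_mul, smul_mul_assoc, smul_mul_assoc, ih, one_mul]; abel
    have := congrArg (· * Z) (spSymAux h a x y)
    simp only [sub_mul _ _ Z, smul_mul_assoc] at this
    rw [← mul_assoc, this, mul_assoc (spH u (a + 1) x * spH u a y) _ Z, ← ih',
      mul_smul_comm]

/-- The full product over the first `k` rows. -/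
def spP (u : ℕ → E) (N : ℕ) (x : ℕ → R) : ℕ → E
  | 0 => 1
  | k + 1 => spT u N k (x k) * spP u N x k

theorem spP_congr (x y : ℕ → R) (k : ℕ) (hxy : ∀ i < k, x i = y i) :
    spP u N x k = spP u N y k := by
  induction k with
  | zero => rfl
  | succ k ih => rw [spP, spP, ih fun i hi => hxy i (by omega), hxy k (by omega)]

theorem spP_div (h : SpRel b u N) (x x' : ℕ → R) (a : ℕ) (h1 : x' a = x (a + 1))
    (h2 : x' (a + 1) = x a) (h3 : ∀ i, i ≠ a → i ≠ a + 1 → x' i = x i) (m : ℕ) :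
    (x a - x (a + 1)) • ((u a - b • 1) * spP u N x (a + 2 + m)) =
      (1 + b * x (a + 1)) • spP u N x (a + 2 + m) -
      (1 + b * x a) • spP u N x' (a + 2 + m) := by
  induction m with
  | zero =>
    have e := spP_congr (u := u) (N := N) x' x a fun i hi => h3 i (by omega) (by omega)
    have := congrArg (· * spP u N x a) (spSym h (x a) (x (a + 1)) a)
    simp only [sub_mul _ _ (spP u N x a), smul_mul_assoc] at this
    simp only [spP, e, h1, h2]
    simpa only [mul_assoc] using this
  | succ m ih =>
    have e := (spT_commU h (show a + 2 ≤ a + 2 + m by omega) (x (a + 2 + m))).eq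
    rw [← add_assoc, spP, spP, h3 (a + 2 + m) (by omega) (by omega)]
    have := congrArg (spT u N (a + 2 + m) (x (a + 2 + m)) * ·) ih
    simp only [mul_sub, mul_smul_comm] at this
    rw [← this, ← mul_assoc, sub_mul, e, ← mul_assoc, mul_sub]
    simp

/-- Boundary products. -/
def spK (b : R) (u : ℕ → E) (x : ℕ → R) (i : ℕ) : ℕ → E
  | 0 => 1
  | k + 1 => (if i < k then spH u (i + k) (x i + x k + b * (x i * x k)) else 1) * spK b u x i k

theorem spK_one (x : ℕ → R) (i k : ℕ) (hk : k ≤ i + 1) : spK b u x i k = 1 := by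
  induction k with
  | zero => rfl
  | succ k ih => rw [spK, if_neg (by omega), ih (by omega), one_mul]

theorem spK_comm (h : SpRel b u N) (x : ℕ → R) (i k a : ℕ) (ha : i + k + 1 ≤ a) (w : R) :
    Commute (spK b u x i k) (spT u N a w) := by
  induction k with
  | zero => exact Commute.one_left _
  | succ k ih =>
    rw [spK]
    refine Commute.mul_left ?_ (ih (by omega))
    split_ifs
    · exact spT_commH h (by omega) _ _
    · exact Commute.one_left _

def spC (b : R) (u : ℕ → E) (N : ℕ) (x : ℕ → R) (i k : ℕ) : E :=
  spB u N (i + k) (x i) * spK b u x i k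

theorem spC_step (h : SpRel b u N) (x : ℕ → R) (i k : ℕ) (hik : i < k) :
    spT u N (i + k) (x k) * spC b u N x i k = spC b u N x i (k + 1) * spT u N (i + k + 1) (x k) := by
  have e := (spK_comm h x i k (i + k + 1) le_rfl (x k)).eq
  rw [spC, spC, ← mul_assoc, spTB h, spK, if_pos hik]
  simp only [mul_assoc]
  rw [e]
  rfl

/-- `C 0 k * ⋯ * C (m-1) k`. -/
def spQ (b : R) (u : ℕ → E) (N : ℕ) (x : ℕ → R) (k : ℕ) : ℕ → E
  | 0 => 1
  | m + 1 => spQ b u N x k m * spC b u N x m k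

theorem spQ_step (h : SpRel b u N) (x : ℕ → R) (k m : ℕ) (hm : m ≤ k) :
    spT u N k (x k) * spQ b u N x k m = spQ b u N x (k + 1) m * spT u N (m + k) (x k) := by
  induction m with
  | zero => simp [spQ]
  | succ m ih =>
    rw [spQ, ← mul_assoc, ih (by omega), mul_assoc, spC_step h x m k (by omega), spQ, mul_assoc,
      show m + 1 + k = m + k + 1 by omega]

end SpAlg

section SpMod
variable {R M : Type*} [CommRing R] [AddCommGroup M] [Module R M]
  {b : R} {u : ℕ → Module.End R M} {N : ℕ}

theorem spBoundary (h : SpRel b u N) (θ : M) (h0 : ∀ a, a % 2 = 0 → u a θ = 0)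
    (h1 : ∀ a, a % 2 = 0 → u a (u (a + 1) θ) = u (a + 2) (u (a + 1) θ)) (w : R) (a : ℕ)
    (ha : a % 2 = 0) : spT u N a w θ = spB u N (a + 1) w θ := by
  induction hk : (N - a) using Nat.strong_induction_on generalizing a with
  | _ k ih =>
    rcases le_or_gt N a with hN | hN
    · rw [spT_one hN, spB_one (by omega)]
    have key : (spH u a w * spH u (a + 1) w) θ = (spH u (a + 2) w * spH u (a + 1) w) θ := by
      simp [spH, h0 a ha, h0 (a + 2) (by omega), h1 a ha]
    have i2 := ih (N - (a + 2)) (by omega) (a + 2) (by omega) rfl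
    have e1 := (spB_commH h (show a + 2 ≤ a + 3 by omega) w w).eq
    have e2 := (spB_commH h (show a + 1 + 2 ≤ a + 3 by omega) w w).eq
    rw [spT_rec h, spT_rec h (a + 1), spB_rec h (a + 1), spB_rec h (a + 2)]
    calc _ = (spH u a w * spH u (a + 1) w) (spT u N (a + 2) w θ) := rfl
      _ = (spH u a w * (spH u (a + 1) w * spB u N (a + 3) w)) θ := by rw [i2]; rfl
      _ = (spB u N (a + 3) w * (spH u a w * spH u (a + 1) w)) θ := by
          rw [e2, ← mul_assoc, e1, mul_assoc]
      _ = spB u N (a + 3) w ((spH u a w * spH u (a + 1) w) θ) := rfl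
      _ = _ := by rw [key]; rfl

theorem spP_eq_Q (h : SpRel b u N) (θ : M) (h0 : ∀ a, a % 2 = 0 → u a θ = 0)
    (h1 : ∀ a, a % 2 = 0 → u a (u (a + 1) θ) = u (a + 2) (u (a + 1) θ)) (x : ℕ → R) (k : ℕ) :
    spP u N x k θ = spQ b u N x k k θ := by
  induction k with
  | zero => rfl
  | succ k ih =>
    calc _ = spT u N k (x k) (spP u N x k θ) := rfl
      _ = (spT u N k (x k) * spQ b u N x k k) θ := by rw [ih]; rfl
      _ = spQ b u N x (k + 1) k (spT u N (k + k) (x k) θ) := by rw [spQ_step h x k k le_rfl]; rfl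
      _ = spQ b u N x (k + 1) k (spB u N (k + k + 1) (x k) θ) := by
        rw [spBoundary h θ h0 h1 _ _ (by omega)]
      _ = _ := by
        rw [spQ, spC, spK_one x k (k + 1) le_rfl, mul_one]; rfl

end SpMod
abbrev FPF (n : ℕ) := {z : Equiv.Perm (Fin n) // IsFPF z}

/-- Natural-number version of a permutation, extended by the identity. -/
def nv {n : ℕ} (z : Equiv.Perm (Fin n)) (k : ℕ) : ℕ := if h : k < n then (z ⟨k, h⟩ : ℕ) else k

/-- Natural-number version of a simple transposition. -/
def sg (c k : ℕ) : ℕ := if k = c then c + 1 else if k = c + 1 then c else k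

theorem nv_fin {n : ℕ} (z : Equiv.Perm (Fin n)) (k : Fin n) : nv z k = (z k : ℕ) := by
  simp [nv]

theorem nv_lt {n : ℕ} (z : Equiv.Perm (Fin n)) {k : ℕ} (hk : k < n) : nv z k < n := by
  simp [nv, hk]

theorem nv_ext {n : ℕ} {z w : Equiv.Perm (Fin n)} (h : ∀ k < n, nv z k = nv w k) : z = w := by
  ext k
  have := h k k.2
  rwa [nv_fin, nv_fin] at this

theorem nv_mul {n : ℕ} (z w : Equiv.Perm (Fin n)) (k : ℕ) : nv (z * w) k = nv z (nv w k) := by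
  by_cases h : k < n <;> simp [nv, h]

theorem nv_swapAt {n c : ℕ} (hc : c + 1 < n) (k : ℕ) : nv (swapAt n c) k = sg c k := by
  unfold nv swapAt sg
  by_cases h : k < n
  · simp only [h, hc, dif_pos, Equiv.swap_apply_def, Fin.ext_iff]
    split_ifs <;> rfl
  · simp only [h, dif_neg, not_false_eq_true]
    split_ifs <;> omega

theorem swapAt_sq (n c : ℕ) : swapAt n c * swapAt n c = 1 := by
  unfold swapAt; split_ifs <;> simp

theorem IsFPF.conj {n : ℕ} {z : Equiv.Perm (Fin n)} (hz : IsFPF z) (c : ℕ) :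
    IsFPF (swapAt n c * z * swapAt n c) := by
  have h := swapAt_sq n c
  refine ⟨?_, fun i hi => hz.2 (swapAt n c i) ?_⟩
  · calc _ = swapAt n c * z * (swapAt n c * swapAt n c) * z * swapAt n c := by group
      _ = swapAt n c * (z * z) * swapAt n c := by rw [h]; group
      _ = 1 := by rw [hz.1]; simpa using h
  · have := congrArg (swapAt n c) hi
    rw [← Equiv.Perm.mul_apply, ← mul_assoc, ← mul_assoc, h, one_mul] at this
    exact this

def fConj {n : ℕ} (c : ℕ) (z : FPF n) : FPF n := ⟨swapAt n c * z.1 * swapAt n c, z.2.conj c⟩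

theorem nv_fConj {n c : ℕ} (hc : c + 1 < n) (z : FPF n) (k : ℕ) :
    nv (fConj c z).1 k = sg c (nv z.1 (sg c k)) := by
  simp only [fConj, nv_mul, nv_swapAt hc]

theorem nv_inv {n : ℕ} (z : FPF n) (k : ℕ) : nv z.1 (nv z.1 k) = k := by
  rw [← nv_mul, z.2.1]; simp [nv]

theorem nv_ne {n : ℕ} (z : FPF n) {k : ℕ} (hk : k < n) : nv z.1 k ≠ k := by
  have := z.2.2 ⟨k, hk⟩
  simpa [nv, hk, Fin.ext_iff] using this

theorem nv_iff {n : ℕ} (z : FPF n) (k l : ℕ) : nv z.1 k = l ↔ nv z.1 l = k := by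
  constructor <;> (rintro rfl; exact nv_inv z _)

theorem nv_inj {n : ℕ} (z : FPF n) {k l : ℕ} (h : nv z.1 k = nv z.1 l) : k = l := by
  have := congrArg (nv z.1) h; rwa [nv_inv, nv_inv] at this

theorem fpf_ext {n : ℕ} {z w : FPF n} (h : ∀ k < n, nv z.1 k = nv w.1 k) : z = w :=
  Subtype.ext (nv_ext h)

theorem fConj_fConj {n : ℕ} (c : ℕ) (z : FPF n) : fConj c (fConj c z) = z := by
  apply Subtype.ext
  have h := swapAt_sq n c
  simp only [fConj]
  calc _ = (swapAt n c * swapAt n c) * z.1 * (swapAt n c * swapAt n c) := by group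
    _ = _ := by rw [h]; group

theorem sg_sg (c k : ℕ) : sg c (sg c k) = k := by unfold sg; split_ifs <;> omega

theorem sg_comm {c d : ℕ} (h : c + 2 ≤ d) (k : ℕ) : sg c (sg d k) = sg d (sg c k) := by
  unfold sg; split_ifs <;> omega

theorem sg_braid (c k : ℕ) : sg c (sg (c + 1) (sg c k)) = sg (c + 1) (sg c (sg (c + 1) k)) := by
  unfold sg; split_ifs <;> omega

theorem sg_lt {d p q : ℕ} (h1 : ¬ (p = d ∧ q = d + 1)) (h2 : ¬ (p = d + 1 ∧ q = d)) :
    sg d p < sg d q ↔ p < q := by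
  unfold sg; split_ifs <;> omega

theorem sg_eq (d p q : ℕ) : sg d p = q ↔ p = sg d q := by
  constructor
  · rintro rfl; rw [sg_sg]
  · rintro rfl; rw [sg_sg]

/-- `c` is a descent (not a cycle) of `z`. -/
def Des {n : ℕ} (c : ℕ) (z : FPF n) : Prop :=
  c + 1 < n ∧ nv z.1 (c + 1) < nv z.1 c ∧ nv z.1 c ≠ c + 1

theorem Des_conj {n c : ℕ} {z : FPF n} (h : Des c z) : ¬ Des c (fConj c z) := by
  rintro ⟨_, h1, h2⟩
  obtain ⟨hc, h3, h4⟩ := h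
  rw [nv_fConj hc, nv_fConj hc] at h1
  have e1 : sg c (c + 1) = c := by simp [sg]
  have e2 : sg c c = c + 1 := by simp [sg]
  rw [e1, e2] at h1
  have := nv_iff z c (c + 1)
  have := nv_ne z hc
  have := nv_ne z (show c < n by omega)
  unfold sg at h1
  split_ifs at h1 <;> omega

theorem asc_conj {n c : ℕ} {z : FPF n} (hc : c + 1 < n) (h : nv z.1 c < nv z.1 (c + 1)) :
    Des c (fConj c z) := by
  have e1 : sg c (c + 1) = c := by simp [sg]
  have e2 : sg c c = c + 1 := by simp [sg]
  refine ⟨hc, ?_⟩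
  rw [nv_fConj hc, nv_fConj hc, e1, e2]
  have := nv_iff z c (c + 1)
  have := nv_ne z hc
  have := nv_ne z (show c < n by omega)
  unfold sg
  split_ifs <;> omega

section SpU
variable {R : Type*} [CommRing R] {n : ℕ}

open Classical in
/-- The operators `u_c` acting on functions on fixed-point-free involutions. -/
def spU (b : R) (c : ℕ) : Module.End R (FPF n → R) where
  toFun f z := if Des c z then f (fConj c z) + b * f z else 0
  map_add' f g := by ext z; simp only [Pi.add_apply]; split_ifs <;> ring
  map_smul' r f := by
    ext z; simp only [Pi.smul_apply, smul_eq_mul, RingHom.id_apply]; split_ifs <;> ring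

open Classical in
theorem spU_apply (b : R) (c : ℕ) (f : FPF n → R) (z : FPF n) :
    spU b c f z = if Des c z then f (fConj c z) + b * f z else 0 := rfl

theorem spU_pos (b : R) (c : ℕ) (f : FPF n → R) (z : FPF n) (h : Des c z) :
    spU b c f z = f (fConj c z) + b * f z := by rw [spU_apply, if_pos h]

theorem spU_neg (b : R) (c : ℕ) (f : FPF n → R) (z : FPF n) (h : ¬ Des c z) :
    spU b c f z = 0 := by rw [spU_apply, if_neg h]

theorem spU_sq (b : R) (c : ℕ) : spU (n := n) b c * spU b c = b • spU b c := by
  refine LinearMap.ext fun f => funext fun z => ?_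
  simp only [Module.End.mul_apply, LinearMap.smul_apply, Pi.smul_apply, smul_eq_mul]
  by_cases h : Des c z
  · rw [spU_pos b c _ z h, spU_neg b c _ _ (Des_conj h)]; ring
  · rw [spU_neg b c _ z h, spU_neg b c _ z h]; ring

theorem fConj_comm {c d : ℕ} (hcd : c + 2 ≤ d) (hd : d + 1 < n) (z : FPF n) :
    fConj c (fConj d z) = fConj d (fConj c z) := by
  apply fpf_ext
  intro k _
  simp only [nv_fConj hd, nv_fConj (show c + 1 < n by omega), sg_comm hcd]

theorem fConj_braid {c : ℕ} (hd : c + 1 + 1 < n) (z : FPF n) :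
    fConj c (fConj (c + 1) (fConj c z)) = fConj (c + 1) (fConj c (fConj (c + 1) z)) := by
  apply fpf_ext
  intro k _
  simp only [nv_fConj hd, nv_fConj (show c + 1 < n by omega)]
  rw [sg_braid, sg_braid]

set_option maxHeartbeats 800000 in
theorem spU_comm (b : R) (c d : ℕ) (hcd : c + 2 ≤ d) :
    spU (n := n) b c * spU b d = spU b d * spU b c := by
  refine LinearMap.ext fun f => funext fun z => ?_
  simp only [Module.End.mul_apply]
  by_cases hd : d + 1 < n
  swap
  · have h1 : ∀ (g : FPF n → R), spU b d g = 0 := by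
      intro g; ext w; exact spU_neg b d g w fun h => hd h.1
    simp [h1]
  have hc : c + 1 < n := by omega
  have i1 := nv_iff z c d
  have i2 := nv_iff z c (d + 1)
  have i3 := nv_iff z (c + 1) d
  have i4 := nv_iff z (c + 1) (d + 1)
  have j1 := nv_iff z c (c + 1)
  have j2 := nv_iff z d (d + 1)
  have k1 := nv_ne z hd
  have k2 := nv_ne z hc
  have k3 := nv_ne z (show d < n by omega)
  have k4 := nv_ne z (show c < n by omega)
  have q1 : nv z.1 c ≠ nv z.1 (c + 1) := fun h => by have := nv_inj z h; omega
  have q2 : nv z.1 d ≠ nv z.1 (d + 1) := fun h => by have := nv_inj z h; omega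
  have e1 : sg c (c + 1) = c := by simp [sg]
  have e2 : sg c c = c + 1 := by simp [sg]
  have e3 : sg d (d + 1) = d := by simp [sg]
  have e4 : sg d d = d + 1 := by simp [sg]
  have e5 : sg c d = d := by unfold sg; split_ifs <;> omega
  have e6 : sg c (d + 1) = d + 1 := by unfold sg; split_ifs <;> omega
  have e7 : sg d c = c := by unfold sg; split_ifs <;> omega
  have e8 : sg d (c + 1) = c + 1 := by unfold sg; split_ifs <;> omega
  by_cases hsp : nv z.1 c = d + 1 ∧ nv z.1 (c + 1) = d
  · obtain ⟨a1, a2⟩ := hsp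
    have a3 := i2.1 a1
    have a4 := i3.1 a2
    have D1 : Des c z := ⟨hc, by omega, by omega⟩
    have D2 : Des d z := ⟨hd, by omega, by omega⟩
    have eq : fConj c z = fConj d z := by
      apply fpf_ext
      intro k _
      simp only [nv_fConj hd, nv_fConj hc]
      by_cases r1 : k = c
      · subst r1; rw [e2, a2, e5, e7, a1, e3]
      by_cases r2 : k = c + 1
      · subst r2; rw [e1, a1, e6, e8, a2, e4]
      by_cases r3 : k = d
      · subst r3; rw [e5, a4, e1, e4, a3, e7]
      by_cases r4 : k = d + 1
      · subst r4; rw [e6, a3, e2, e3, a4, e8]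
      have t1 : sg c k = k := by simp [sg, r1, r2]
      have t2 : sg d k = k := by simp [sg, r3, r4]
      rw [t1, t2]
      have := nv_iff z k c
      have := nv_iff z k (c + 1)
      have := nv_iff z k d
      have := nv_iff z k (d + 1)
      unfold sg
      split_ifs <;> omega
    have n1 := Des_conj D1
    have n2 := Des_conj D2
    rw [spU_pos b c _ z D1, spU_pos b d _ z D2, spU_pos b d _ z D2, spU_pos b c _ z D1,
      spU_neg b d _ (fConj c z) (by rw [eq]; exact n2),
      spU_neg b c _ (fConj d z) (by rw [← eq]; exact n1), eq]
  by_cases hsp2 : nv z.1 c = d ∧ nv z.1 (c + 1) = d + 1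
  · obtain ⟨a1, a2⟩ := hsp2
    have a3 := i1.1 a1
    have a4 := i4.1 a2
    rw [spU_neg b c _ z (fun h => by have := h.2.1; omega),
      spU_neg b d _ z (fun h => by have := h.2.1; omega)]
  · have D1 : Des c (fConj d z) ↔ Des c z := by
      have m1 := sg_lt (d := d) (p := nv z.1 (c + 1)) (q := nv z.1 c)
        (fun h => hsp ⟨h.2, h.1⟩) (fun h => hsp2 ⟨h.2, h.1⟩)
      have m2 := sg_eq d (nv z.1 c) (c + 1)
      simp only [Des, nv_fConj hd, e7, e8, m1, m2, ne_eq]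
    have D2 : Des d (fConj c z) ↔ Des d z := by
      have m1 := sg_lt (d := c) (p := nv z.1 (d + 1)) (q := nv z.1 d)
        (fun h => hsp ⟨i2.2 h.1, i3.2 h.2⟩) (fun h => hsp2 ⟨i1.2 h.2, i4.2 h.1⟩)
      have m2 := sg_eq c (nv z.1 d) (d + 1)
      simp only [Des, nv_fConj hc, e5, e6, m1, m2, ne_eq]
    have cm := fConj_comm hcd hd z
    by_cases h1 : Des c z
    · have h3 := D1.2 h1
      by_cases h2 : Des d z
      · have h4 := D2.2 h2
        simp only [spU_apply, h1, h2, h3, h4, if_true, cm]; ring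
      · have h4 : ¬ Des d (fConj c z) := fun h => h2 (D2.1 h)
        simp only [spU_apply, h1, h2, h4, if_true, if_false]; ring
    · have h3 : ¬ Des c (fConj d z) := fun h => h1 (D1.1 h)
      by_cases h2 : Des d z
      · simp only [spU_apply, h1, h2, h3, if_true, if_false]; ring
      · simp only [spU_apply, h1, h2, if_false]

theorem spU_braid (b : R) (c : ℕ) :
    spU (n := n) b c * (spU b (c + 1) * spU b c) =
      spU b (c + 1) * (spU b c * spU b (c + 1)) := by
  refine LinearMap.ext fun f => funext fun z => ?_
  simp only [Module.End.mul_apply]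
  by_cases hd : c + 1 + 1 < n
  swap
  · have h1 : ∀ (g : FPF n → R), spU b (c + 1) g = 0 := by
      intro g; ext w; exact spU_neg b _ g w fun h => hd h.1
    simp [h1]
  have hc : c + 1 < n := by omega
  have i1 := nv_iff z c (c + 1)
  have i2 := nv_iff z c (c + 1 + 1)
  have i3 := nv_iff z (c + 1) (c + 1 + 1)
  have k1 := nv_ne z hd
  have k2 := nv_ne z hc
  have k3 := nv_ne z (show c < n by omega)
  have q1 : nv z.1 c ≠ nv z.1 (c + 1) := fun h => by have := nv_inj z h; omega
  have q2 : nv z.1 c ≠ nv z.1 (c + 1 + 1) := fun h => by have := nv_inj z h; omega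
  have q3 : nv z.1 (c + 1) ≠ nv z.1 (c + 1 + 1) := fun h => by have := nv_inj z h; omega
  have e1 : sg c (c + 1) = c := by simp [sg]
  have e2 : sg c c = c + 1 := by simp [sg]
  have e3 : sg (c + 1) (c + 1 + 1) = c + 1 := by simp [sg]
  have e4 : sg (c + 1) (c + 1) = c + 1 + 1 := by simp [sg]
  have e5 : sg c (c + 1 + 1) = c + 1 + 1 := by unfold sg; split_ifs <;> omega
  have e6 : sg (c + 1) c = c := by unfold sg; split_ifs <;> omega
  -- descents at all the elements involved
  have A1 : Des c z ↔ nv z.1 (c + 1) < nv z.1 c ∧ nv z.1 c ≠ c + 1 := by simp [Des, hc]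
  have A2 : Des (c + 1) z ↔ nv z.1 (c + 1 + 1) < nv z.1 (c + 1) ∧
    nv z.1 (c + 1) ≠ c + 1 + 1 := by simp [Des, hd]
  have A3 : Des (c + 1) (fConj c z) ↔ sg c (nv z.1 (c + 1 + 1)) < sg c (nv z.1 c) ∧
      sg c (nv z.1 c) ≠ c + 1 + 1 := by simp [Des, hd, nv_fConj hc, e1, e5]
  have A4 : Des c (fConj (c + 1) z) ↔ sg (c + 1) (nv z.1 (c + 1 + 1)) < sg (c + 1) (nv z.1 c) ∧
      sg (c + 1) (nv z.1 c) ≠ c + 1 := by simp [Des, hc, nv_fConj hd, e4, e6]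
  have A5 : Des c (fConj (c + 1) (fConj c z)) ↔
      sg (c + 1) (sg c (nv z.1 (c + 1 + 1))) < sg (c + 1) (sg c (nv z.1 (c + 1))) ∧
      sg (c + 1) (sg c (nv z.1 (c + 1))) ≠ c + 1 := by
    simp [Des, hc, nv_fConj hd, nv_fConj hc, e4, e5, e6, e2]
  have A6 : Des (c + 1) (fConj c (fConj (c + 1) z)) ↔
      sg c (sg (c + 1) (nv z.1 (c + 1))) < sg c (sg (c + 1) (nv z.1 c)) ∧
      sg c (sg (c + 1) (nv z.1 c)) ≠ c + 1 + 1 := by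
    simp [Des, hd, nv_fConj hd, nv_fConj hc, e1, e3, e5, e6]
  have N1 : Des c z → ¬ Des c (fConj c z) := Des_conj
  have N2 : Des (c + 1) z → ¬ Des (c + 1) (fConj (c + 1) z) := Des_conj
  generalize nv z.1 c = p at *
  generalize nv z.1 (c + 1) = q at *
  generalize nv z.1 (c + 1 + 1) = r at *
  have S : (Des c z ∧ Des (c + 1) z ∧ Des (c + 1) (fConj c z) ∧ Des c (fConj (c + 1) z) ∧
      Des c (fConj (c + 1) (fConj c z)) ∧ Des (c + 1) (fConj c (fConj (c + 1) z))) ∨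
      (¬ (Des c z ∧ Des (c + 1) z) ∧
        (Des c z → Des (c + 1) (fConj c z) → ¬ Des c (fConj (c + 1) (fConj c z))) ∧
        (Des (c + 1) z → Des c (fConj (c + 1) z) → ¬ Des (c + 1) (fConj c (fConj (c + 1) z)))) := by
    rw [A1, A2, A3, A4, A5, A6]
    clear A1 A2 A3 A4 A5 A6 N1 N2 e1 e2 e3 e4 e5 e6
    have sp : (p = c + 1 ∧ q = c) ∨ (p = c + 1 + 1 ∧ r = c) ∨ (q = c + 1 + 1 ∧ r = c + 1) ∨
      ((p < c ∨ c + 2 < p) ∧ (q < c ∨ c + 2 < q) ∧ (r < c ∨ c + 2 < r)) := by omega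
    have g : ∀ t, (t < c ∨ c + 2 < t) → sg c t = t ∧ sg (c + 1) t = t := by
      intro t ht; unfold sg; constructor <;> (split_ifs <;> omega)
    have v1 : sg c c = c + 1 := by simp [sg]
    have v2 : sg c (c + 1) = c := by simp [sg]
    have v3 : sg c (c + 1 + 1) = c + 1 + 1 := by unfold sg; split_ifs <;> omega
    have v4 : sg (c + 1) c = c := by unfold sg; split_ifs <;> omega
    have v5 : sg (c + 1) (c + 1) = c + 1 + 1 := by simp [sg]
    have v6 : sg (c + 1) (c + 1 + 1) = c + 1 := by simp [sg]
    rcases sp with ⟨rfl, rfl⟩ | ⟨rfl, rfl⟩ | ⟨rfl, rfl⟩ | ⟨hp, hq, hr⟩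
    · obtain ⟨g1, g2⟩ := g r (by omega)
      simp only [g1, g2, v1, v2, v3, v4, v5, v6]; omega
    · obtain ⟨g1, g2⟩ := g q (by omega)
      simp only [g1, g2, v1, v2, v3, v4, v5, v6]; omega
    · obtain ⟨g1, g2⟩ := g p (by omega)
      simp only [g1, g2, v1, v2, v3, v4, v5, v6]; omega
    · obtain ⟨g1, g2⟩ := g p hp
      obtain ⟨g3, g4⟩ := g q hq
      obtain ⟨g5, g6⟩ := g r hr
      simp only [g1, g2, g3, g4, g5, g6]; omega
  have br := fConj_braid hd z
  rcases S with ⟨a1, a2, a3, a4, a5, a6⟩ | ⟨a1, a2, a3⟩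
  · simp only [spU_apply, a1, a2, a3, a4, a5, a6, N1 a1, N2 a2, if_true, if_false, br]
    ring
  · trans (0 : R)
    · by_cases h1 : Des c z
      · have h2 : ¬ Des (c + 1) z := fun h => a1 ⟨h1, h⟩
        rw [spU_pos b c _ z h1, spU_neg b (c + 1) _ z h2]
        by_cases h3 : Des (c + 1) (fConj c z)
        · rw [spU_pos b (c + 1) _ _ h3, spU_neg b c f _ (a2 h1 h3), spU_neg b c f _ (N1 h1)]
          ring
        · rw [spU_neg b (c + 1) _ _ h3]; ring
      · rw [spU_neg b c _ z h1]
    · symm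
      by_cases h1 : Des (c + 1) z
      · have h2 : ¬ Des c z := fun h => a1 ⟨h, h1⟩
        rw [spU_pos b (c + 1) _ z h1, spU_neg b c _ z h2]
        by_cases h3 : Des c (fConj (c + 1) z)
        · rw [spU_pos b c _ _ h3, spU_neg b (c + 1) f _ (a3 h1 h3), spU_neg b (c + 1) f _ (N2 h1)]
          ring
        · rw [spU_neg b c _ _ h3]; ring
      · rw [spU_neg b (c + 1) _ z h1]

theorem spU_rel (b : R) : SpRel b (spU (n := n) b) (n - 1) where
  sq := spU_sq b
  comm := spU_comm b
  braid := spU_braid b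
  zero := fun c hc => by
    refine LinearMap.ext fun f => funext fun z => ?_
    exact spU_neg b c f z fun h => by have := h.1; omega

end SpU
/-- The symplectic Rothe diagram with natural-number entries. -/
def dSet {n : ℕ} (z : FPF n) : Finset (ℕ × ℕ) :=
  (Finset.range n ×ˢ Finset.range n).filter
    (fun p => p.2 < p.1 ∧ p.2 < nv z.1 p.1 ∧ p.1 < nv z.1 p.2)

theorem mem_dSet {n : ℕ} (z : FPF n) (i a : ℕ) : (i, a) ∈ dSet z ↔
    (i < n ∧ a < n) ∧ a < i ∧ a < nv z.1 i ∧ i < nv z.1 a := by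
  simp [dSet]

theorem fpfLen_eq {n : ℕ} (z : FPF n) : fpfLen z.1 = (dSet z).card := by
  unfold fpfLen
  have inv : ∀ k, z.1 (z.1 k) = k := fun k => by
    rw [← Equiv.Perm.mul_apply, z.2.1]; rfl
  refine Finset.card_bij (fun p _ => ((p.1 : ℕ), (z.1 p.2 : ℕ))) ?_ ?_ ?_
  · rintro ⟨i, j⟩ h
    simp only [Finset.mem_filter, Finset.mem_univ, true_and] at h
    rw [mem_dSet, nv_fin, nv_fin, inv]
    exact ⟨⟨i.2, (z.1 j).2⟩, h.2.1, h.1, h.2.2⟩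
  · rintro ⟨i, j⟩ h ⟨i', j'⟩ h' e
    simp only [Prod.mk.injEq, Fin.val_inj, EmbeddingLike.apply_eq_iff_eq] at e
    rw [e.1, e.2]
  · rintro ⟨i, a⟩ h
    rw [mem_dSet] at h
    obtain ⟨⟨hi, ha⟩, h1, h2, h3⟩ := h
    refine ⟨(⟨i, hi⟩, z.1 ⟨a, ha⟩), ?_, ?_⟩
    · simp only [nv, hi, ha, dif_pos] at h2 h3
      simp only [Finset.mem_filter, Finset.mem_univ, true_and, inv]
      exact ⟨h2, h1, h3⟩
    · simp [inv]

theorem dSet_aux (c i a zi za zc zd : ℕ) (h1 : zi = c ↔ i = zc) (h2 : zi = c + 1 ↔ i = zd)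
    (h3 : za = c ↔ a = zc) (h4 : za = c + 1 ↔ a = zd) (h5 : zd < zc) (h6 : zc ≠ c + 1)
    (h7 : zc ≠ c) (h8 : zd ≠ c + 1) (h9 : zd ≠ c) (i1 : i = c → zi = zc) (i2 : i = c + 1 → zi = zd)
    (i3 : a = c → za = zc) (i4 : a = c + 1 → za = zd)
    (e1 : ¬ (i = c + 1 ∧ a = c)) (e2 : ¬ (i = c ∧ a = c + 1)) :
    (¬ (i = zd ∧ a = c) ∧ ¬ (i = c ∧ a = zd) ∧ a < i ∧ a < zi ∧ i < za) ↔
      (sg c a < sg c i ∧ sg c a < sg c zi ∧ sg c i < sg c za) := by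
  rw [sg_lt (p := a) (q := i) (by omega) (by omega)]
  by_cases x1 : i = zd ∧ a = c
  · have : zi = c + 1 := h2.2 x1.1
    obtain ⟨x1, rfl⟩ := x1
    subst this
    simp [sg]
    omega
  by_cases x2 : i = c ∧ a = zd
  · have : za = c + 1 := h4.2 x2.2
    obtain ⟨rfl, x2⟩ := x2
    have q1 : sg i za = i := by rw [this]; simp [sg]
    have q2 : sg i i = i + 1 := by simp [sg]
    rw [q1, q2]
    constructor
    · rintro ⟨_, h, _⟩; exact absurd ⟨rfl, x2⟩ h
    · rintro ⟨_, _, h⟩; omega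
  by_cases x3 : i = zc ∧ a = c + 1
  · have : zi = c := h1.2 x3.1
    have : za = zd := i4 x3.2
    have : sg c za = za := by unfold sg; split_ifs <;> omega
    have : sg c i = i := by unfold sg; split_ifs <;> omega
    omega
  by_cases x4 : i = c + 1 ∧ a = zc
  · have : za = c := h3.2 x4.2
    have : zi = zd := i2 x4.1
    have : sg c zi = zi := by unfold sg; split_ifs <;> omega
    have : sg c a = a := by unfold sg; split_ifs <;> omega
    omega
  rw [sg_lt (p := a) (q := zi) (fun h => x1 ⟨h2.1 h.2, h.1⟩) (fun h => x3 ⟨h1.1 h.2, h.1⟩),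
    sg_lt (p := i) (q := za) (fun h => x2 ⟨h.1, h4.1 h.2⟩) (fun h => x4 ⟨h.1, h3.1 h.2⟩)]
  exact ⟨fun h => h.2.2, fun h => ⟨x1, x2, h⟩⟩

theorem fpfLen_des {n c : ℕ} {z : FPF n} (h : Des c z) :
    fpfLen z.1 = fpfLen (fConj c z).1 + 1 := by
  obtain ⟨hc, hd1, hd2⟩ := h
  have k1 := nv_ne z hc
  have k2 := nv_ne z (show c < n by omega)
  have k3 := nv_iff z c (c + 1)
  have sgn : ∀ k, sg c k < n ↔ k < n := fun k => by unfold sg; split_ifs <;> omega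
  have e1 : sg c (c + 1) = c := by simp [sg]
  have e2 : sg c c = c + 1 := by simp [sg]
  have aux : ∀ i a, ¬ (i = c + 1 ∧ a = c) → ¬ (i = c ∧ a = c + 1) →
      ((¬ (i = nv z.1 (c + 1) ∧ a = c) ∧ ¬ (i = c ∧ a = nv z.1 (c + 1)) ∧ (i, a) ∈ dSet z) ↔
        (sg c i, sg c a) ∈ dSet (fConj c z)) := by
    intro i a x1 x2
    rw [mem_dSet, mem_dSet, nv_fConj hc, nv_fConj hc, sg_sg, sg_sg, sgn, sgn]
    have := dSet_aux c i a (nv z.1 i) (nv z.1 a) (nv z.1 c) (nv z.1 (c + 1))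
      ((nv_iff z i c).trans eq_comm) ((nv_iff z i _).trans eq_comm)
      ((nv_iff z a c).trans eq_comm) ((nv_iff z a _).trans eq_comm) hd1 hd2 k2 k1
      (by omega) (by rintro rfl; rfl) (by rintro rfl; rfl)
      (by rintro rfl; rfl) (by rintro rfl; rfl) x1 x2
    constructor
    · rintro ⟨y1, y2, y3, y4⟩; exact ⟨y3, this.1 ⟨y1, y2, y4⟩⟩
    · rintro ⟨y3, y4⟩
      obtain ⟨y1, y2, y5⟩ := this.2 y4
      exact ⟨y1, y2, y3, y5⟩
  have aux2 : (c + 1, c) ∈ dSet z ↔ (c + 1, c) ∈ dSet (fConj c z) := by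
    rw [mem_dSet, mem_dSet, nv_fConj hc, nv_fConj hc, e1, e2]
    unfold sg
    split_ifs <;> omega
  obtain ⟨new, hnew, hiff⟩ : ∃ new, new ∈ dSet z ∧ ∀ i a, (i, a) ∈ dSet z →
      ((i, a) ≠ new ↔ ¬ (i = nv z.1 (c + 1) ∧ a = c) ∧ ¬ (i = c ∧ a = nv z.1 (c + 1))) := by
    have hl := nv_lt z.1 hc
    rcases lt_or_ge (c + 1) (nv z.1 (c + 1)) with hh | hh
    · refine ⟨(nv z.1 (c + 1), c), ?_, ?_⟩
      · rw [mem_dSet, nv_inv]; omega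
      · intro i a hm
        rw [mem_dSet] at hm
        simp only [ne_eq, Prod.mk.injEq]; omega
    · refine ⟨(c, nv z.1 (c + 1)), ?_, ?_⟩
      · rw [mem_dSet, nv_inv]; omega
      · intro i a hm
        rw [mem_dSet] at hm
        simp only [ne_eq, Prod.mk.injEq]; omega
  rw [fpfLen_eq, fpfLen_eq, ← Finset.card_erase_add_one hnew]
  congr 1
  have lt_of : ∀ (w : FPF n) i a, (i, a) ∈ dSet w → ¬ (i = c ∧ a = c + 1) := by
    intro w i a hm; rw [mem_dSet] at hm; omega
  have ne_sg : ∀ i a, ¬ (i = c + 1 ∧ a = c) → ¬ (i = c ∧ a = c + 1) →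
      ¬ (sg c i = c + 1 ∧ sg c a = c) ∧ ¬ (sg c i = c ∧ sg c a = c + 1) := by
    intro i a x1 x2
    rw [sg_eq, sg_eq, sg_eq, sg_eq, e1, e2]; omega
  let φ : ℕ × ℕ → ℕ × ℕ := fun p => if p = (c + 1, c) then p else (sg c p.1, sg c p.2)
  have φ1 : φ (c + 1, c) = (c + 1, c) := by simp [φ]
  have φ2 : ∀ i a, ¬ (i = c + 1 ∧ a = c) → φ (i, a) = (sg c i, sg c a) := by
    intro i a x; simp only [φ, Prod.mk.injEq, if_neg x]
  have φφ : ∀ i a, ¬ (i = c ∧ a = c + 1) → φ (φ (i, a)) = (i, a) := by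
    intro i a x
    by_cases y : i = c + 1 ∧ a = c
    · rw [y.1, y.2, φ1, φ1]
    · rw [φ2 i a y, φ2 _ _ (ne_sg i a y x).1, sg_sg, sg_sg]
  refine Finset.card_bij' (fun p _ => φ p) (fun p _ => φ p) ?_ ?_ ?_ ?_
  · rintro ⟨i, a⟩ hm
    rw [Finset.mem_erase] at hm
    by_cases y : i = c + 1 ∧ a = c
    · obtain ⟨rfl, rfl⟩ := y
      rw [φ1]; exact aux2.1 hm.2
    · have x := lt_of z i a hm.2
      have r := (hiff i a hm.2).1 hm.1
      rw [φ2 i a y]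
      exact (aux i a y x).1 ⟨r.1, r.2, hm.2⟩
  · rintro ⟨i, a⟩ hm
    rw [Finset.mem_erase]
    by_cases y : i = c + 1 ∧ a = c
    · obtain ⟨rfl, rfl⟩ := y
      rw [φ1]
      have := aux2.2 hm
      refine ⟨(hiff _ _ this).2 ?_, this⟩
      omega
    · have x := lt_of _ i a hm
      have r := ne_sg i a y x
      rw [φ2 i a y]
      have := (aux (sg c i) (sg c a) r.1 r.2).2 (by rw [sg_sg, sg_sg]; exact hm)
      exact ⟨(hiff _ _ this.2.2).2 ⟨this.1, this.2.1⟩, this.2.2⟩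
  · rintro ⟨i, a⟩ hm
    exact φφ i a (lt_of z i a (Finset.mem_of_mem_erase hm))
  · rintro ⟨i, a⟩ hm
    exact φφ i a (lt_of _ i a hm)

theorem nv_theta {n : ℕ} (hn : n % 2 = 0) {k : ℕ} (hk : k < n) :
    nv (theta n hn) k = if k % 2 = 0 then k + 1 else k - 1 := by
  simp only [nv, hk, dif_pos, theta]
  rfl

theorem theta_fpf {n : ℕ} (hn : n % 2 = 0) : IsFPF (theta n hn) := by
  constructor
  · apply nv_ext
    intro k hk
    have := nv_theta hn hk
    have h2 := nv_lt (theta n hn) hk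
    rw [nv_mul, nv_theta hn h2, this]
    simp only [nv, hk, dif_pos, Equiv.Perm.one_apply]
    split_ifs <;> omega
  · intro i hi
    have := nv_theta hn i.2
    rw [nv_fin, hi] at this
    split_ifs at this <;> omega

def thetaV {n : ℕ} (hn : n % 2 = 0) : FPF n := ⟨theta n hn, theta_fpf hn⟩

theorem fpfLen_theta {n : ℕ} (hn : n % 2 = 0) : fpfLen (theta n hn) = 0 := by
  have := fpfLen_eq (thetaV hn)
  rw [show theta n hn = (thetaV hn).1 from rfl, this, Finset.card_eq_zero,
    Finset.eq_empty_iff_forall_notMem]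
  rintro ⟨i, a⟩ h
  rw [mem_dSet] at h
  obtain ⟨⟨hi, ha⟩, h1, h2, h3⟩ := h
  have := nv_theta hn ha
  change nv (thetaV hn).1 a = _ at this
  split_ifs at this <;> omega

section SpWord
variable {R : Type*} [CommRing R] {n : ℕ}

open Classical in
/-- Basis vector. -/
def dlt (R : Type*) [CommRing R] {n : ℕ} (w : FPF n) : FPF n → R := fun z => if z = w then 1 else 0

theorem fConj_eq_iff (c : ℕ) (z w : FPF n) : fConj c z = w ↔ z = fConj c w := by
  constructor <;> (rintro rfl; rw [fConj_fConj])

theorem spU_dlt_asc (b : R) {c : ℕ} (w : FPF n) (hc : c + 1 < n)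
    (h : nv w.1 c < nv w.1 (c + 1)) : spU b c (dlt R w) = dlt R (fConj c w) := by
  have hd := asc_conj hc h
  funext z
  rw [spU_apply]
  simp only [dlt, fConj_eq_iff]
  have : ¬ Des c w := fun h' => by have := h'.2.1; omega
  by_cases hz : Des c z
  · have : z ≠ w := by rintro rfl; contradiction
    simp [hz, this]
  · have : z ≠ fConj c w := by rintro rfl; contradiction
    simp [hz, this]

theorem spU_dlt_des (b : R) {c : ℕ} (w : FPF n) (h : Des c w) :
    spU b c (dlt R w) = b • dlt R w := by
  have hd := Des_conj h
  funext z
  rw [spU_apply]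
  simp only [dlt, fConj_eq_iff, Pi.smul_apply, smul_eq_mul]
  by_cases hz : Des c z
  · have : z ≠ fConj c w := by rintro rfl; contradiction
    simp [hz, this]
  · have : z ≠ w := by rintro rfl; contradiction
    simp [hz, this]

theorem spU_dlt_zero (b : R) {c : ℕ} (w : FPF n) (h : ¬ Des c w)
    (h2 : ¬ (c + 1 < n ∧ nv w.1 c < nv w.1 (c + 1))) :
    spU b c (dlt R w) = 0 := by
  funext z
  rw [spU_apply]
  simp only [dlt, Pi.zero_apply]
  by_cases hz : Des c z
  · have e : z ≠ w := by rintro rfl; contradiction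
    have : fConj c z ≠ w := by
      rintro rfl
      apply h2
      refine ⟨hz.1, ?_⟩
      by_contra h3
      apply Des_conj hz
      refine ⟨hz.1, ?_, ?_⟩
      · rcases lt_trichotomy (nv (fConj c z).1 c) (nv (fConj c z).1 (c + 1)) with h | h | h
        · exact absurd h h3
        · have := nv_inj _ h; omega
        · exact h
      · rw [nv_fConj hz.1]
        have hc := hz.1
        have e2 : sg c c = c + 1 := by simp [sg]
        have e1 : sg c (c + 1) = c := by simp [sg]
        rw [e2, ne_eq, sg_eq, e1]
        have := nv_iff z (c + 1) c
        have := hz.2.2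
        tauto
    simp [hz, this, e]
  · simp [hz]

theorem heckeStep_asc {c : ℕ} (w : FPF n) (hc : c + 1 < n) (h : nv w.1 c < nv w.1 (c + 1)) :
    heckeStep c w.1 = some (fConj c w).1 := by
  simp only [nv, hc, Nat.lt_of_succ_lt hc, dif_pos, Fin.val_fin_lt] at h
  simp [heckeStep, hc, h, fConj, swapAt]

theorem heckeStep_des {c : ℕ} (w : FPF n) (h : Des c w) : heckeStep c w.1 = some w.1 := by
  obtain ⟨hc, h1, h2⟩ := h
  have h3 := nv_iff w c (c + 1)
  simp only [nv, hc, Nat.lt_of_succ_lt hc, dif_pos, Fin.val_fin_lt] at h1 h2 h3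
  have h4 : w.1 ⟨c, Nat.lt_of_succ_lt hc⟩ ≠ ⟨c + 1, hc⟩ := by
    intro h; apply h2; rw [h]
  have h5 : w.1 ⟨c + 1, hc⟩ ≠ ⟨c, Nat.lt_of_succ_lt hc⟩ := by
    intro h; apply h2; rw [h3, h]
  simp [heckeStep, hc, h1, h4, h5, not_lt_of_gt h1]

theorem heckeStep_zero {c : ℕ} (w : FPF n) (h : ¬ Des c w)
    (h2 : ¬ (c + 1 < n ∧ nv w.1 c < nv w.1 (c + 1))) : heckeStep c w.1 = none := by
  by_cases hc : c + 1 < n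
  · have hlt : ¬ nv w.1 c < nv w.1 (c + 1) := fun h => h2 ⟨hc, h⟩
    have hcy : nv w.1 c = c + 1 := by
      by_contra h3
      apply h
      refine ⟨hc, ?_, h3⟩
      rcases lt_trichotomy (nv w.1 c) (nv w.1 (c + 1)) with h | h | h
      · contradiction
      · have := nv_inj _ h; omega
      · exact h
    have hcy2 := (nv_iff w _ _).1 hcy
    simp only [nv, hc, Nat.lt_of_succ_lt hc, dif_pos] at hcy hcy2
    have h4 : w.1 ⟨c, Nat.lt_of_succ_lt hc⟩ = ⟨c + 1, hc⟩ := Fin.ext hcy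
    have h5 : w.1 ⟨c + 1, hc⟩ = ⟨c, Nat.lt_of_succ_lt hc⟩ := Fin.ext hcy2
    simp [heckeStep, hc, h4, h5]
  · simp [heckeStep, hc]

/-- Apply a word of operators. -/
def spW (b : R) (l : List ℕ) : Module.End R (FPF n → R) := (l.reverse.map (spU b)).prod

theorem spW_nil (b : R) : spW (n := n) b [] = 1 := rfl
theorem spW_cons (b : R) (a : ℕ) (l : List ℕ) :
    spW (n := n) b (a :: l) = spW b l * spU b a := by simp [spW]
theorem spW_snoc (b : R) (a : ℕ) (l : List ℕ) :
    spW (n := n) b (l ++ [a]) = spU b a * spW b l := by simp [spW]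

theorem heckeApply_snoc (a : ℕ) (l : List ℕ) (z : Equiv.Perm (Fin n)) :
    heckeApply (l ++ [a]) z = (heckeApply l z).bind (heckeStep a) := by
  simp [heckeApply]

theorem spW_theta (b : R) (hn : n % 2 = 0) (l : List ℕ) :
    (heckeApply l (theta n hn) = none ∧ spW b l (dlt R (thetaV hn)) = 0) ∨
    ∃ z : FPF n, heckeApply l (theta n hn) = some z.1 ∧ fpfLen z.1 ≤ l.length ∧
      spW b l (dlt R (thetaV hn)) = b ^ (l.length - fpfLen z.1) • dlt R z := by
  induction l using List.reverseRecOn with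
  | nil =>
    right
    refine ⟨thetaV hn, rfl, ?_, ?_⟩
    · exact (fpfLen_theta hn).le
    · simp [spW_nil]
  | append_singleton l a ih =>
    rw [heckeApply_snoc, spW_snoc, Module.End.mul_apply]
    rcases ih with ⟨h1, h2⟩ | ⟨w, h1, h2, h3⟩
    · left; simp [h1, h2]
    rw [h1, h3, Option.bind_some, map_smul, List.length_append, List.length_singleton]
    by_cases hd : Des a w
    · right
      refine ⟨w, heckeStep_des w hd, by omega, ?_⟩
      rw [spU_dlt_des b w hd, smul_smul, ← pow_succ]
      congr 2; omega
    by_cases ha : a + 1 < n ∧ nv w.1 a < nv w.1 (a + 1)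
    · right
      have := fpfLen_des (asc_conj ha.1 ha.2)
      rw [fConj_fConj] at this
      refine ⟨fConj a w, heckeStep_asc w ha.1 ha.2, by omega, ?_⟩
      rw [spU_dlt_asc b w ha.1 ha.2]
      congr 2; omega
    · left
      exact ⟨heckeStep_zero w hd ha, by rw [spU_dlt_zero b w hd ha, smul_zero]⟩

open Classical in
theorem spW_coeff (b : R) (hn : n % 2 = 0) (l : List ℕ) (z : FPF n) :
    spW b l (dlt R (thetaV hn)) z =
      if heckeApply l (theta n hn) = some z.1 then b ^ (l.length - fpfLen z.1) else 0 := by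
  rcases spW_theta b hn l with ⟨h1, h2⟩ | ⟨w, h1, h2, h3⟩
  · simp [h1, h2]
  · rw [h1, h3]
    simp only [Pi.smul_apply, dlt, smul_eq_mul, Option.some.injEq]
    by_cases h : z = w
    · simp [h]
    · have : ¬ w.1 = z.1 := fun e => h (Subtype.ext e.symm)
      simp [h, this]

theorem spU_theta0 (b : R) (hn : n % 2 = 0) (a : ℕ) (ha : a % 2 = 0) :
    spU b a (dlt R (thetaV hn)) = 0 := by
  by_cases hc : a + 1 < n
  · have h1 := nv_theta hn (show a < n by omega)
    have h2 := nv_theta hn hc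
    rw [if_pos ha] at h1
    rw [if_neg (by omega)] at h2
    apply spU_dlt_zero
    · intro h; exact h.2.2 h1
    · rintro ⟨_, h⟩
      change nv (theta n hn) a < nv (theta n hn) (a + 1) at h
      omega
  · apply spU_dlt_zero
    · intro h; exact hc h.1
    · rintro ⟨h, _⟩; exact hc h

theorem spU_theta1 (b : R) (hn : n % 2 = 0) (a : ℕ) (ha : a % 2 = 0) :
    spU b a (spU b (a + 1) (dlt R (thetaV hn))) =
      spU b (a + 2) (spU b (a + 1) (dlt R (thetaV hn))) := by
  by_cases hc : a + 1 + 1 < n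
  swap
  · rw [spU_dlt_zero b (c := a + 1)]
    · simp
    · intro h; exact hc h.1
    · rintro ⟨h, _⟩; exact hc h
  have hd : a + 3 < n := by omega
  have h0 := nv_theta hn (show a < n by omega)
  have h1 := nv_theta hn (show a + 1 < n by omega)
  have h2 := nv_theta hn (show a + 1 + 1 < n by omega)
  have h3 := nv_theta hn (show a + 3 < n by omega)
  rw [if_pos (by omega)] at h0 h2
  rw [if_neg (by omega)] at h1 h3
  change nv (thetaV hn).1 _ = _ at h0 h1 h2 h3
  rw [spU_dlt_asc b _ hc (by omega)]
  obtain ⟨w, hw⟩ : ∃ w, w = fConj (a + 1) (thetaV hn) := ⟨_, rfl⟩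
  rw [← hw]
  have w0 : nv w.1 a = a + 2 := by
    rw [hw, nv_fConj hc, show sg (a + 1) a = a by unfold sg; split_ifs <;> omega, h0]; unfold sg; split_ifs <;> omega
  have w1 : nv w.1 (a + 1) = a + 3 := by
    rw [hw, nv_fConj hc, show sg (a + 1) (a + 1) = a + 1 + 1 by unfold sg; split_ifs <;> omega, h2]; unfold sg; split_ifs <;> omega
  have w2 : nv w.1 (a + 2) = a := (nv_iff w _ _).1 w0
  have w3 : nv w.1 (a + 3) = a + 1 := (nv_iff w _ _).1 w1
  rw [spU_dlt_asc b w (c := a) (by omega) (by omega),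
    spU_dlt_asc b w (c := a + 2) (by omega) (by rw [show a + 2 + 1 = a + 3 from rfl]; omega)]
  congr 1
  apply fpf_ext
  intro k _
  rw [nv_fConj (c := a) (by omega), nv_fConj (c := a + 2) (by omega)]
  by_cases r0 : k = a
  · subst r0
    rw [show sg k k = k + 1 by unfold sg; split_ifs <;> omega, w1, show sg (k + 2) k = k by unfold sg; split_ifs <;> omega, w0]
    unfold sg; split_ifs <;> omega
  by_cases r1 : k = a + 1
  · subst r1
    rw [show sg a (a + 1) = a by unfold sg; split_ifs <;> omega, w0, show sg (a + 2) (a + 1) = a + 1 by unfold sg; split_ifs <;> omega, w1]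
    unfold sg; split_ifs <;> omega
  by_cases r2 : k = a + 2
  · subst r2
    rw [show sg a (a + 2) = a + 2 by unfold sg; split_ifs <;> omega, w2, show sg (a + 2) (a + 2) = a + 3 by unfold sg; split_ifs <;> omega, w3]
    unfold sg; split_ifs <;> omega
  by_cases r3 : k = a + 3
  · subst r3
    rw [show sg a (a + 3) = a + 3 by unfold sg; split_ifs <;> omega, w3, show sg (a + 2) (a + 3) = a + 2 by unfold sg; split_ifs <;> omega, w2]
    unfold sg; split_ifs <;> omega
  have i0 := nv_iff w k a
  have i1 := nv_iff w k (a + 1)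
  have i2 := nv_iff w k (a + 2)
  have i3 := nv_iff w k (a + 3)
  rw [show sg a k = k by unfold sg; split_ifs <;> omega, show sg (a + 2) k = k by unfold sg; split_ifs <;> omega]
  unfold sg
  split_ifs <;> omega

end SpWord
section SpExpand
variable {R : Type*} [CommRing R] {n : ℕ} {ι : Type*}

/-- Apply the factors `1 + y u` in list order. -/
def opL (b : R) (ℓ : ι → ℕ) (y : ι → R) (L : List ι) (v : FPF n → R) : FPF n → R :=
  L.foldl (fun v p => spH (spU b) (ℓ p) (y p) v) v

theorem opL_expand [DecidableEq ι] (b : R) (ℓ : ι → ℕ) (y : ι → R) (L : List ι) (hL : L.Nodup) :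
    ∀ v : FPF n → R, opL b ℓ y L v =
      ∑ S ∈ L.toFinset.powerset, (∏ p ∈ S, y p) •
        spW b ((L.filter (fun p => p ∈ S)).map ℓ) v := by
  induction L with
  | nil => intro v; simp [opL, spW_nil]
  | cons p L ih =>
    intro v
    rw [List.nodup_cons] at hL
    have hp : p ∉ L.toFinset := by simpa using hL.1
    have step : opL b ℓ y (p :: L) v = opL b ℓ y L (v + y p • spU b (ℓ p) v) := by
      simp [opL, spH]
    rw [step, ih hL.2, List.toFinset_cons, Finset.sum_powerset_insert hp,
      ← Finset.sum_add_distrib]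
    refine Finset.sum_congr rfl fun S hS => ?_
    rw [Finset.mem_powerset] at hS
    have hpS : p ∉ S := fun h => hp (hS h)
    have f1 : (p :: L).filter (fun q => q ∈ S) = L.filter (fun q => q ∈ S) := by
      rw [List.filter_cons_of_neg]; simpa using hpS
    have f2 : (p :: L).filter (fun q => q ∈ insert p S) = p :: L.filter (fun q => q ∈ S) := by
      rw [List.filter_cons_of_pos (by simp)]
      congr 1
      refine List.filter_congr fun q hq => ?_
      have : q ≠ p := by rintro rfl; exact hL.1 hq
      simp [this]
    rw [f1, f2, Finset.prod_insert hpS, List.map_cons, spW_cons, Module.End.mul_apply, map_add,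
      map_smul, smul_add, smul_smul, mul_comm (y p)]

theorem spUp_foldl (b x : R) (m : ℕ) : ∀ (a : ℕ) (v : FPF n → R),
    (List.range m).reverse.foldl (fun v k => spH (spU b) (a + k) x v) v =
      spUp (spU b) x a m v := by
  induction m with
  | zero => intro a v; simp [spUp]
  | succ m ih =>
    intro a v
    rw [List.range_succ_eq_map, List.reverse_cons, List.foldl_append, ← List.map_reverse,
      List.foldl_map, spUp, Module.End.mul_apply, ← ih]
    simp only [List.foldl_cons, List.foldl_nil, Nat.succ_eq_add_one, add_zero, add_assoc,
      add_comm 1]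

theorem spP_foldl (b : R) (x : ℕ → R) (m : ℕ) (v : FPF n → R) :
    (List.range m).foldl (fun v k => spT (spU b) (n - 1) k (x k) v) v =
      spP (spU b) (n - 1) x m v := by
  induction m with
  | zero => simp [spP]
  | succ m ih => rw [List.range_succ, List.foldl_append, ih, spP]; rfl

/-- All boxes in row order. -/
def boxes (n : ℕ) : List (Fin n × Fin n) :=
  (List.finRange n).flatMap fun a => (List.finRange n).reverse.map fun c => (a, c)

theorem map_val_finRange (n : ℕ) : (List.finRange n).map Fin.val = List.range n := by
  apply List.ext_getElem <;> simp

theorem opL_boxes (b : R) (x : ℕ → R) (v : FPF n → R) :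
    opL b (fun p : Fin n × Fin n => (p.1 : ℕ) + (p.2 : ℕ)) (fun p => x p.1) (boxes n) v =
      spP (spU b) (n - 1) x n v := by
  unfold opL boxes
  rw [List.foldl_flatMap, ← spP_foldl, ← map_val_finRange, List.foldl_map]
  congr 1
  funext v a
  rw [List.foldl_map, ← spUp_eq_T (spU_rel b) (x a) n a (by omega), ← spUp_foldl,
    ← map_val_finRange, ← List.map_reverse, List.foldl_map]

theorem boxes_pairwise (n : ℕ) : (boxes n).Pairwise rowOrder := by
  unfold boxes
  rw [List.pairwise_flatMap]
  constructor
  · intro a _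
    rw [List.pairwise_map, List.pairwise_reverse]
    exact (List.pairwise_lt_finRange n).imp fun h => Or.inr ⟨rfl, h⟩
  · refine (List.pairwise_lt_finRange n).imp fun {a a'} h => ?_
    intro p hp q hq
    simp only [List.mem_map] at hp hq
    obtain ⟨_, _, rfl⟩ := hp
    obtain ⟨_, _, rfl⟩ := hq
    exact Or.inl h

theorem mem_boxes (p : Fin n × Fin n) : p ∈ boxes n := by
  simp [boxes]

theorem rowOrder_irrefl (p : Fin n × Fin n) : ¬ rowOrder p p := by
  simp [rowOrder]

theorem rowOrder_trans {p q r : Fin n × Fin n} (h : rowOrder p q) (h' : rowOrder q r) :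
    rowOrder p r := by
  unfold rowOrder at *
  omega

theorem pairwise_nodup {L : List (Fin n × Fin n)} (h : L.Pairwise rowOrder) : L.Nodup :=
  h.imp fun {a b} h e => by subst e; exact rowOrder_irrefl _ h

theorem boxes_nodup (n : ℕ) : (boxes n).Nodup := pairwise_nodup (boxes_pairwise n)

theorem delta_iff (hn : n % 2 = 0) (z : Equiv.Perm (Fin n)) (S : Finset (Fin n × Fin n)) :
    DeltaHeckeWord n hn z S ↔ heckeApply (((boxes n).filter (fun p => p ∈ S)).map
      (fun p => (p.1 : ℕ) + (p.2 : ℕ))) (theta n hn) = some z := by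
  have hpw : ((boxes n).filter (fun p => p ∈ S)).Pairwise rowOrder :=
    (boxes_pairwise n).sublist List.filter_sublist
  have : Trans (rowOrder (n := n)) rowOrder rowOrder := ⟨rowOrder_trans⟩
  have hS : ((boxes n).filter (fun p => p ∈ S)).toFinset = S := by
    ext p; simp [mem_boxes]
  constructor
  · rintro ⟨L, h1, h2, h3⟩
    have h2' : L.Pairwise rowOrder := List.isChain_iff_pairwise.1 h2
    have : L = (boxes n).filter (fun p => p ∈ S) := by
      refine List.Perm.eq_of_pairwise ?_ h2' hpw ?_
      · intro a b _ _ h h'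
        exact absurd (rowOrder_trans h h') (rowOrder_irrefl _)
      · refine List.perm_of_nodup_nodup_toFinset_eq (pairwise_nodup h2') (pairwise_nodup hpw) ?_
        rw [h1]
        ext p; simp [mem_boxes]
    rwa [← this]
  · intro h
    refine ⟨_, ?_, List.isChain_iff_pairwise.2 hpw, h⟩
    ext p; simp [mem_boxes]

open Classical in
theorem spP_theta (b : R) (hn : n % 2 = 0) (x : ℕ → R) (z : FPF n) :
    spP (spU b) (n - 1) x n (dlt R (thetaV hn)) z =
      ∑ S ∈ Finset.univ.filter (fun S => DeltaHeckeWord n hn z.1 S),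
        b ^ (S.card - fpfLen z.1) * ∏ p ∈ S, x (p.1 : ℕ) := by
  have hb : (boxes n).toFinset = Finset.univ := by ext p; simp [mem_boxes]
  rw [← opL_boxes, opL_expand _ _ _ _ (boxes_nodup n), Finset.sum_apply, Finset.sum_filter, hb,
    Finset.powerset_univ]
  refine Finset.sum_congr rfl fun S _ => ?_
  have hlen : ((boxes n).filter (fun p => p ∈ S)).length = S.card := by
    rw [← List.toFinset_card_of_nodup ((boxes_nodup n).filter _)]
    congr 1; ext p; simp [mem_boxes]
  rw [Pi.smul_apply, spW_coeff, delta_iff, List.length_map, hlen, smul_eq_mul, mul_ite, mul_zero,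
    mul_comm]
  split_ifs <;> rfl

end SpExpand
section SpHom
variable {R : Type*} [CommRing R] {n : ℕ}

theorem phi_H (φ : R →+* R) (b : R) (hb : φ b = b) (c : ℕ) (y : R) (v : FPF n → R) :
    (fun z => φ (spH (spU b) c y v z)) = spH (spU b) c (φ y) (fun z => φ (v z)) := by
  funext z
  simp only [spH, LinearMap.add_apply, LinearMap.smul_apply, Module.End.one_apply, Pi.add_apply,
    Pi.smul_apply, smul_eq_mul, map_add, map_mul, spU_apply]
  split_ifs <;> simp [hb]

theorem phi_Up (φ : R →+* R) (b : R) (hb : φ b = b) (y : R) (m : ℕ) : ∀ (a : ℕ) (v : FPF n → R),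
    (fun z => φ (spUp (spU b) y a m v z)) = spUp (spU b) (φ y) a m (fun z => φ (v z)) := by
  induction m with
  | zero => intro a v; simp [spUp]
  | succ m ih =>
    intro a v
    rw [spUp, spUp, Module.End.mul_apply, Module.End.mul_apply, phi_H φ b hb, ih]

theorem phi_P (φ : R →+* R) (b : R) (hb : φ b = b) (N : ℕ) (x : ℕ → R) (m : ℕ) (v : FPF n → R) :
    (fun z => φ (spP (spU b) N x m v z)) =
      spP (spU b) N (fun k => φ (x k)) m (fun z => φ (v z)) := by
  induction m with
  | zero => simp [spP]
  | succ m ih =>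
    rw [spP, spP, Module.End.mul_apply, Module.End.mul_apply, spT, spT, phi_Up φ b hb, ih]

theorem phi_dlt (φ : R →+* R) (w : FPF n) : (fun z => φ (dlt R w z)) = dlt R w := by
  funext z
  simp only [dlt]
  split_ifs <;> simp

theorem spUp_zero (b : R) (m : ℕ) : ∀ a, spUp (spU (n := n) b) (0 : R) a m = 1 := by
  induction m with
  | zero => intro a; rfl
  | succ m ih => intro a; rw [spUp, ih]; simp [spH]

theorem spP_zero (b : R) (N m : ℕ) : spP (spU (n := n) b) N (fun _ => (0 : R)) m = 1 := by
  induction m with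
  | zero => rfl
  | succ m ih => rw [spP, ih, spT, spUp_zero, one_mul]

/-- Triangularity bookkeeping. -/
def Good (t : ℕ) (y : R) (v : FPF n → R) : Prop :=
  ∀ z : FPF n, (t < fpfLen z.1 → v z = 0) ∧ (fpfLen z.1 = t → v z = 0 ∨ v z = y)

theorem Good_H (b : R) {t : ℕ} {y : R} {v : FPF n → R} (h : Good t y v) (c : ℕ) (p : R) :
    Good (t + 1) (p * y) (spH (spU b) c p v) := by
  intro z
  have e : spH (spU b) c p v z = v z + p * spU b c v z := by
    simp [spH]
  rw [e]
  by_cases hd : Des c z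
  · have hl := fpfLen_des hd
    rw [spU_pos b c v z hd]
    constructor
    · intro ht
      rw [(h z).1 (by omega), (h _).1 (by omega)]; ring
    · intro ht
      rw [(h z).1 (by omega)]
      rcases (h (fConj c z)).2 (by omega) with h' | h'
      · left; rw [h']; ring
      · right; rw [h']; ring
  · rw [spU_neg b c v z hd]
    constructor
    · intro ht
      rw [(h z).1 (by omega)]; ring
    · intro ht
      rw [(h z).1 (by omega)]; left; ring

/-- Exponent contributed by a pair. -/
def eK (n i k : ℕ) : ℕ := if i < k ∧ i + k + 2 ≤ n then 1 else 0

/-- Factor contributed by a pair. -/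
def fK (n : ℕ) (b : R) (x : ℕ → R) (i k : ℕ) : R :=
  if i < k ∧ i + k + 2 ≤ n then x i + x k + b * (x i * x k) else 1

theorem Good_K (b : R) (x : ℕ → R) (i k : ℕ) {t : ℕ} {y : R} {v : FPF n → R} (h : Good t y v) :
    Good (t + ∑ j ∈ Finset.range k, eK n i j) ((∏ j ∈ Finset.range k, fK n b x i j) * y)
      (spK b (spU b) x i k v) := by
  induction k with
  | zero => simpa [spK] using h
  | succ k ih =>
    rw [spK, Module.End.mul_apply, Finset.sum_range_succ, Finset.prod_range_succ]
    by_cases h1 : i < k ∧ i + k + 2 ≤ n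
    · rw [if_pos h1.1, eK, if_pos h1, fK, if_pos h1, ← add_assoc]
      have := Good_H b ih (i + k) (x i + x k + b * (x i * x k))
      convert this using 1
      ring
    · have : (if i < k then spH (spU (n := n) b) (i + k) (x i + x k + b * (x i * x k)) else 1) = 1 := by
        split_ifs with h2
        · exact spH_one (spU_rel b) (by omega) _
        · rfl
      rw [this, eK, if_neg h1, fK, if_neg h1, add_zero, mul_one]
      exact ih

theorem Good_Q (b : R) (x : ℕ → R) (m : ℕ) : ∀ {t : ℕ} {y : R} {v : FPF n → R}, Good t y v →
    Good (t + ∑ i ∈ Finset.range m, ∑ j ∈ Finset.range n, eK n i j)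
      ((∏ i ∈ Finset.range m, ∏ j ∈ Finset.range n, fK n b x i j) * y)
      (spQ b (spU b) (n - 1) x n m v) := by
  induction m with
  | zero => intro t y v h; simpa [spQ] using h
  | succ m ih =>
    intro t y v h
    rw [spQ, Module.End.mul_apply, spC, spB_one (by omega), one_mul, Finset.sum_range_succ,
      Finset.prod_range_succ]
    have := ih (Good_K b x m n h)
    convert this using 1
    · omega
    · ring

theorem Good_theta (hn : n % 2 = 0) : Good 0 1 (dlt R (thetaV hn)) := by
  intro z
  constructor
  · intro h
    have : z ≠ thetaV hn := by
      rintro rfl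
      have := fpfLen_theta hn
      change fpfLen (thetaV hn).1 = 0 at this
      omega
    simp [dlt, this]
  · intro _
    simp only [dlt]
    split_ifs <;> simp

theorem Good_P (b : R) (hn : n % 2 = 0) (x : ℕ → R) :
    Good (∑ i ∈ Finset.range n, ∑ j ∈ Finset.range n, eK n i j)
      (∏ i ∈ Finset.range n, ∏ j ∈ Finset.range n, fK n b x i j)
      (spP (spU b) (n - 1) x n (dlt R (thetaV hn))) := by
  rw [spP_eq_Q (spU_rel b) (dlt R (thetaV hn)) (fun a ha => spU_theta0 b hn a ha)
    (fun a ha => spU_theta1 b hn a ha) x n]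
  have := Good_Q b x n (Good_theta (R := R) hn)
  rwa [zero_add, mul_one] at this

end SpHom

section SpFinal
variable {n : ℕ}

/-- The variables. -/
def xv (n : ℕ) (k : ℕ) : MvPolynomial (Fin n) Rb := if h : k < n then X ⟨k, h⟩ else 0

theorem xv_fin (k : Fin n) : xv n k = X k := by simp [xv]

theorem rev_fpf (hn : n % 2 = 0) : IsFPF (revPerm n) := by
  refine ⟨by ext i; simp [revPerm], fun i h => ?_⟩
  have := congrArg Fin.val h
  simp only [revPerm, Equiv.coe_fn_mk, Fin.val_rev] at this
  omega

theorem top_eq (n : ℕ) :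
    ∏ i ∈ Finset.range n, ∏ j ∈ Finset.range n, fK n (C bb) (xv n) i j = spTop n := by
  rw [spTop, Finset.prod_filter, Fintype.prod_prod_type, Finset.prod_range]
  refine Finset.prod_congr rfl fun i _ => ?_
  rw [Finset.prod_range]
  refine Finset.prod_congr rfl fun j _ => ?_
  simp only [fK, oplus, xv_fin, Fin.lt_def]

theorem len_eq (n : ℕ) :
    ∑ i ∈ Finset.range n, ∑ j ∈ Finset.range n, eK n i j = fpfLen (revPerm n) := by
  have : fpfLen (revPerm n) = (Finset.univ.filter
      (fun p : Fin n × Fin n => p.1 < p.2 ∧ (p.1 : ℕ) + (p.2 : ℕ) + 2 ≤ n)).card := by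
    unfold fpfLen
    refine Finset.card_bij' (fun p _ => (p.2.rev, p.1)) (fun p _ => (p.2, p.1.rev)) ?_ ?_ ?_ ?_
    · rintro ⟨i, j⟩ h
      simp only [Finset.mem_filter, Finset.mem_univ, true_and, revPerm, Equiv.coe_fn_mk,
        Fin.lt_def, Fin.val_rev] at h ⊢
      omega
    · rintro ⟨i, j⟩ h
      simp only [Finset.mem_filter, Finset.mem_univ, true_and, revPerm, Equiv.coe_fn_mk,
        Fin.lt_def, Fin.val_rev] at h ⊢
      omega
    · rintro ⟨i, j⟩ h; simp
    · rintro ⟨i, j⟩ h; simp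
  rw [this, Finset.card_filter, Fintype.sum_prod_type, Finset.sum_range]
  refine Finset.sum_congr rfl fun i _ => ?_
  rw [Finset.sum_range]
  refine Finset.sum_congr rfl fun j _ => ?_
  simp only [eK, Fin.lt_def]

/-- The candidate family. -/
def spF (hn : n % 2 = 0) (z : FPF n) : MvPolynomial (Fin n) Rb :=
  spP (spU (C bb)) (n - 1) (xv n) n (dlt _ (thetaV hn)) z

theorem spF_top (hn : n % 2 = 0) :
    spF hn ⟨revPerm n, rev_fpf hn⟩ = 0 ∨ spF hn ⟨revPerm n, rev_fpf hn⟩ = spTop n := by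
  have := (Good_P (C bb) hn (xv n) ⟨revPerm n, rev_fpf hn⟩).2 (len_eq n).symm
  rwa [top_eq] at this

theorem spF_div (hn : n % 2 = 0) (c : ℕ) (z : FPF n) (h : Des c z) :
    IsDivDiffB ⟨c, Nat.lt_of_succ_lt h.1⟩ ⟨c + 1, h.1⟩ (spF hn z) (spF hn (fConj c z)) := by
  have hc := h.1
  obtain ⟨i, hi⟩ : ∃ i : Fin n, i = ⟨c, Nat.lt_of_succ_lt h.1⟩ := ⟨_, rfl⟩
  obtain ⟨j, hj⟩ : ∃ j : Fin n, j = ⟨c + 1, h.1⟩ := ⟨_, rfl⟩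
  rw [← hi, ← hj]
  obtain ⟨m, hm⟩ : ∃ m, n = c + 2 + m := ⟨n - (c + 2), by omega⟩
  have xi : xv n c = X i := by rw [hi]; simp [xv, Nat.lt_of_succ_lt hc]
  have xj : xv n (c + 1) = X j := by rw [hj]; simp [xv, hc]
  let φ : MvPolynomial (Fin n) Rb →+* MvPolynomial (Fin n) Rb :=
    (rename (R := Rb) (Equiv.swap i j)).toRingHom
  have φ_def : ∀ p, φ p = rename (Equiv.swap i j) p := fun p => rfl
  have key := spP_div (spU_rel (n := n) (C bb : MvPolynomial (Fin n) Rb)) (xv n)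
    (fun k => φ (xv n k)) c
    (by rw [xi, xj, φ_def, rename_X, Equiv.swap_apply_left])
    (by rw [xi, xj, φ_def, rename_X, Equiv.swap_apply_right])
    (by
      intro k k1 k2
      simp only [φ_def, xv]
      split_ifs with hk
      · rw [rename_X, Equiv.swap_apply_of_ne_of_ne]
        · rw [hi]; simpa using k1
        · rw [hj]; simpa using k2
      · simp) m
  rw [← hm] at key
  have key2 := congrArg (fun T => T (dlt _ (thetaV hn)) z) key
  have e := congrFun (phi_P φ (C bb) (by rw [φ_def, rename_C]) (n - 1) (xv n) n
    (dlt _ (thetaV hn))) z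
  rw [phi_dlt] at e
  simp only [LinearMap.smul_apply, LinearMap.sub_apply, Module.End.mul_apply, Pi.smul_apply,
    Pi.sub_apply, Module.End.one_apply, smul_eq_mul, ← e, spU_pos _ c _ z h, xi, xj] at key2
  unfold IsDivDiffB
  rw [map_mul, map_add, map_one, map_mul, rename_C, rename_X, Equiv.swap_apply_right, ← φ_def]
  change _ * (spF hn (fConj c z) + _ * spF hn z - _ * spF hn z) =
    _ * spF hn z - _ * φ (spF hn z) at key2
  rw [← key2]
  ring

theorem no_asc (hn : n % 2 = 0) (z : FPF n)
    (h : ∀ c, c + 1 < n → nv z.1 (c + 1) < nv z.1 c) : z = ⟨revPerm n, rev_fpf hn⟩ := by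
  have up : ∀ k, k < n → nv z.1 k + k + 1 ≤ n := by
    intro k
    induction k with
    | zero => intro hk; have := nv_lt z.1 hk; omega
    | succ k ih => intro hk; have := h k hk; have := ih (by omega); omega
  have dn : ∀ j k, j + k + 1 = n → j ≤ nv z.1 k := by
    intro j
    induction j with
    | zero => intro k _; omega
    | succ j ih => intro k hk; have := ih (k + 1) (by omega); have := h k (by omega); omega
  apply fpf_ext
  intro k hk
  have a1 := up k hk
  have a2 := dn (n - 1 - k) k (by omega)
  have a3 : nv (revPerm n) k = n - (k + 1) := by
    simp [nv, hk, revPerm]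
  rw [a3]; omega

theorem fam_unique (hn : n % 2 = 0) (F1 F2 : FPF n → MvPolynomial (Fin n) Rb)
    (h0 : F1 ⟨revPerm n, rev_fpf hn⟩ = F2 ⟨revPerm n, rev_fpf hn⟩)
    (h1 : ∀ c (z : FPF n) (h : Des c z),
      IsDivDiffB ⟨c, Nat.lt_of_succ_lt h.1⟩ ⟨c + 1, h.1⟩ (F1 z) (F1 (fConj c z)))
    (h2 : ∀ c (z : FPF n) (h : Des c z),
      IsDivDiffB ⟨c, Nat.lt_of_succ_lt h.1⟩ ⟨c + 1, h.1⟩ (F2 z) (F2 (fConj c z))) :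
    ∀ (k : ℕ) (z : FPF n), n * n - fpfLen z.1 ≤ k → F1 z = F2 z := by
  have bound : ∀ z : FPF n, fpfLen z.1 ≤ n * n := by
    intro z
    refine (Finset.card_le_univ _).trans ?_
    simp
  intro k
  induction k with
  | zero =>
    intro z hz
    have e : z = ⟨revPerm n, rev_fpf hn⟩ := by
      apply no_asc hn
      intro c hc
      rcases lt_trichotomy (nv z.1 c) (nv z.1 (c + 1)) with h | h | h
      · have d := asc_conj hc h
        have l := fpfLen_des d
        rw [fConj_fConj] at l
        have := bound (fConj c z)
        omega
      · have := nv_inj _ h; omega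
      · exact h
    rw [e, h0]
  | succ k ih =>
    intro z hz
    by_cases ha : ∃ c, c + 1 < n ∧ nv z.1 c < nv z.1 (c + 1)
    · obtain ⟨c, hc, h⟩ := ha
      have d := asc_conj hc h
      have l := fpfLen_des d
      rw [fConj_fConj] at l
      have b1 := bound (fConj c z)
      have e := ih (fConj c z) (by omega)
      have q1 := h1 c _ d
      have q2 := h2 c _ d
      unfold IsDivDiffB at q1 q2
      rw [fConj_fConj] at q1 q2
      rw [e, ← q2] at q1
      refine mul_left_cancel₀ ?_ q1
      rw [sub_ne_zero]
      intro hX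
      have := X_injective hX
      simp at this
    · have e : z = ⟨revPerm n, rev_fpf hn⟩ := by
        apply no_asc hn
        intro c hc
        rcases lt_trichotomy (nv z.1 c) (nv z.1 (c + 1)) with h | h | h
        · exact absurd ⟨c, hc, h⟩ ha
        · have := nv_inj _ h; omega
        · exact h
      rw [e, h0]

theorem spF_theta (hn : n % 2 = 0) : spF hn (thetaV hn) ≠ 0 := by
  intro h
  let φ : MvPolynomial (Fin n) Rb →+* MvPolynomial (Fin n) Rb := C.comp constantCoeff
  have φ_def : ∀ p, φ p = C (constantCoeff p) := fun p => rfl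
  have e := congrFun (phi_P φ (C bb) (by rw [φ_def, constantCoeff_C]) (n - 1) (xv n) n
    (dlt _ (thetaV hn))) (thetaV hn)
  have e0 : (fun k => φ (xv n k)) = fun _ => 0 := by
    funext k
    simp only [φ_def, xv]
    split_ifs <;> simp
  rw [phi_dlt, e0, spP_zero] at e
  change φ (spF hn (thetaV hn)) = _ at e
  rw [h, map_zero] at e
  simp [dlt] at e

theorem spF_rev (hn : n % 2 = 0) : spF hn ⟨revPerm n, rev_fpf hn⟩ = spTop n := by
  rcases spF_top hn with h | h
  · exfalso
    apply spF_theta hn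
    refine fam_unique hn (spF hn) (fun _ => 0) h (spF_div hn) ?_ _ (thetaV hn) le_rfl
    intro c z _
    simp [IsDivDiffB]
  · exact h

theorem fam_div {G : Equiv.Perm (Fin n) → MvPolynomial (Fin n) Rb} (hG : IsSpFam n G) (c : ℕ)
    (z : FPF n) (h : Des c z) :
    IsDivDiffB ⟨c, Nat.lt_of_succ_lt h.1⟩ ⟨c + 1, h.1⟩ (G z.1) (G (fConj c z).1) := by
  have hc := h.1
  obtain ⟨_, h1, h2⟩ := h
  have h3 := nv_iff z c (c + 1)
  simp only [nv, hc, Nat.lt_of_succ_lt hc, dif_pos, Fin.val_fin_lt] at h1 h2 h3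
  have := hG.2 z.1 z.2 ⟨c, Nat.lt_of_succ_lt hc⟩ ⟨c + 1, hc⟩ rfl
    (fun h => h2 (by rw [h])) (fun h => h2 (h3.2 (by rw [h]))) h1
  simpa [fConj, swapAt, hc] using this

end SpFinal
theorem statement3 (n : ℕ) (hpos : 0 < n) (hev : n % 2 = 0)
    (G : Equiv.Perm (Fin n) → MvPolynomial (Fin n) Rb) (hG : IsSpFam n G)
    (z : Equiv.Perm (Fin n)) (hz : IsFPF z) :
    G z = ∑ S ∈ @Finset.filter (Finset (Fin n × Fin n))
        (fun S => DeltaHeckeWord n hev z S) (Classical.decPred _) Finset.univ,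
      C (bb ^ (S.card - fpfLen z)) * ∏ p ∈ S, X p.1 := by
  have key := fam_unique hev (fun w => G w.1) (spF hev) (by rw [spF_rev]; exact hG.1)
    (fam_div hG) (spF_div hev) _ ⟨z, hz⟩ le_rfl
  change G z = spF hev ⟨z, hz⟩ at key
  rw [key, spF, spP_theta]
  refine Finset.sum_congr (by congr) fun S _ => ?_
  rw [C_pow]
  congr 1
  exact Finset.prod_congr rfl fun p _ => xv_fin p.1

end
end

section
/- (i) If z ∈ I_n is O-dominant, i.e. D^O(z) = {(i+j−1, j) : j ∈ [k], 1 ≤ i ≤ μ_j} for some strict partition μ_1 > ⋯ > μ_k > 0, then MX^O_z = {A ∈ Mat^O_n : A_{ij} = 0 for all (i,j) ∈ D^O(z)}. (ii) If n is even and z ∈ I^FPF_n is Sp-dominant, i.e. D^Sp(z) = {(i+j, j) : j ∈ [k], 1 ≤ i ≤ μ_j} for some strict partition μ, then MX^Sp_z = {A ∈ Mat^Sp_n : A_{ij} = 0 for all (i,j) ∈ D^Sp(z)}. -/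
open MvPolynomial

noncomputable section

theorem mem_DO' {n : ℕ} (z : Equiv.Perm (Fin n)) (hz : z * z = 1) (p : Fin n × Fin n) :
    p ∈ DO n z ↔ p.2 < z p.1 ∧ p.2 ≤ p.1 ∧ p.1 < z p.2 := by
  have hzz : ∀ a, z (z a) = a := fun a => by simpa using congrArg (fun w => w a) hz
  obtain ⟨a, b⟩ := p
  simp only [DO, Finset.mem_image, Finset.mem_filter, Finset.mem_univ, true_and, Prod.exists,
    Prod.mk.injEq]
  constructor
  · rintro ⟨x, y, h, rfl, rfl⟩
    simpa [hzz] using h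
  · intro h
    exact ⟨a, z b, by simpa [hzz] using h, rfl, hzz b⟩

theorem mem_DSp' {n : ℕ} (z : Equiv.Perm (Fin n)) (hz : z * z = 1) (p : Fin n × Fin n) :
    p ∈ DSp n z ↔ p.2 < z p.1 ∧ p.2 < p.1 ∧ p.1 < z p.2 := by
  have hzz : ∀ a, z (z a) = a := fun a => by simpa using congrArg (fun w => w a) hz
  obtain ⟨a, b⟩ := p
  simp only [DSp, Finset.mem_image, Finset.mem_filter, Finset.mem_univ, true_and, Prod.exists,
    Prod.mk.injEq]
  constructor
  · rintro ⟨x, y, h, rfl, rfl⟩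
    simpa [hzz] using h
  · intro h
    exact ⟨a, z b, by simpa [hzz] using h, rfl, hzz b⟩

theorem cornerRank_eq {n : ℕ} (A : Matrix (Fin n) (Fin n) ℂ) (i j : ℕ) (hi : i ≤ n) (hj : j ≤ n) :
    cornerRank A i j = (A.submatrix (Fin.castLE hi) (Fin.castLE hj)).rank := by
  have aux : ∀ (p q : ℕ) (hp : p ≤ n) (hq : q ≤ n), p = i → q = j →
      (A.submatrix (Fin.castLE hp) (Fin.castLE hq)).rank =
        (A.submatrix (Fin.castLE hi) (Fin.castLE hj)).rank := by
    intro p q hp hq h1 h2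
    subst h1 h2
    rfl
  exact aux (min i n) (min j n) (min_le_right _ _) (min_le_right _ _)
    (min_eq_left hi) (min_eq_left hj)

theorem cornerRank_transpose {n : ℕ} (A : Matrix (Fin n) (Fin n) ℂ) (i j : ℕ)
    (hi : i ≤ n) (hj : j ≤ n) : cornerRank A.transpose i j = cornerRank A j i := by
  rw [cornerRank_eq _ _ _ hi hj, cornerRank_eq _ _ _ hj hi, ← Matrix.transpose_submatrix,
    Matrix.rank_transpose]

theorem cornerRank_succ_left {n : ℕ} (A : Matrix (Fin n) (Fin n) ℂ) (i j : ℕ)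
    (hi : i + 1 ≤ n) (hj : j ≤ n) : cornerRank A (i + 1) j ≤ cornerRank A i j + 1 := by
  rw [cornerRank_eq _ _ _ hi hj, cornerRank_eq _ _ _ (by omega) hj,
    Matrix.rank_eq_finrank_span_row, Matrix.rank_eq_finrank_span_row]
  set M := A.submatrix (Fin.castLE hi) (Fin.castLE hj)
  set N := A.submatrix (Fin.castLE (show i ≤ n by omega)) (Fin.castLE hj)
  have h1 : Submodule.span ℂ (Set.range M.row) ≤
      Submodule.span ℂ (Set.range N.row) ⊔ Submodule.span ℂ {M.row (Fin.last i)} := by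
    rw [Submodule.span_le]
    rintro _ ⟨a, rfl⟩
    induction a using Fin.lastCases with
    | last => exact Submodule.mem_sup_right (Submodule.mem_span_singleton_self _)
    | cast a => exact Submodule.mem_sup_left (Submodule.subset_span ⟨a, rfl⟩)
  refine (Submodule.finrank_mono h1).trans ((Submodule.finrank_add_le_finrank_add_finrank _ _).trans ?_)
  gcongr
  exact (finrank_span_le_card _).trans (by simp)

theorem cornerRank_succ_right {n : ℕ} (A : Matrix (Fin n) (Fin n) ℂ) (i j : ℕ)
    (hi : i ≤ n) (hj : j + 1 ≤ n) : cornerRank A i (j + 1) ≤ cornerRank A i j + 1 := by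
  have := cornerRank_succ_left A.transpose j i hj hi
  rwa [cornerRank_transpose _ _ _ hj hi, cornerRank_transpose _ _ _ (by omega) hi] at this

theorem cornerRank_zero {n : ℕ} (A : Matrix (Fin n) (Fin n) ℂ) (i j : ℕ)
    (hi : i ≤ n) (hj : j ≤ n) :
    cornerRank A i j = 0 ↔ ∀ a b : Fin n, (a : ℕ) < i → (b : ℕ) < j → A a b = 0 := by
  rw [cornerRank_eq _ _ _ hi hj]
  constructor
  · intro h a b ha hb
    rw [Matrix.rank_eq_finrank_span_row, Submodule.finrank_eq_zero, Submodule.span_eq_bot] at h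
    exact congrFun (h _ ⟨⟨a, ha⟩, rfl⟩) ⟨b, hb⟩
  · intro h
    have : A.submatrix (Fin.castLE hi) (Fin.castLE hj) = 0 := by
      ext a b
      exact h _ _ a.2 b.2
    rw [this, Matrix.rank_zero]

theorem permRank_mono {n : ℕ} (z : Equiv.Perm (Fin n)) {i i' j j' : ℕ} (h : i ≤ i') (h' : j ≤ j') :
    permRank z i j ≤ permRank z i' j' := by
  apply Finset.card_le_card
  intro k hk
  simp only [Finset.mem_filter, Finset.mem_univ, true_and] at hk ⊢
  omega

theorem permRank_lt {n : ℕ} (z : Equiv.Perm (Fin n)) {i i' j j' : ℕ} (h : i ≤ i') (h' : j ≤ j')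
    (k : Fin n) (hk : (k : ℕ) < j') (hk' : ((z k : Fin n) : ℕ) < i')
    (hn : ¬ ((k : ℕ) < j ∧ ((z k : Fin n) : ℕ) < i)) :
    permRank z i j + 1 ≤ permRank z i' j' := by
  apply Finset.card_lt_card
  rw [Finset.ssubset_iff_of_subset]
  · exact ⟨k, by simp [hk, hk'], by simpa using hn⟩
  · intro k hk
    simp only [Finset.mem_filter, Finset.mem_univ, true_and] at hk ⊢
    omega

theorem permRank_zero {n : ℕ} (z : Equiv.Perm (Fin n)) (i j : ℕ)
    (h : ∀ k : Fin n, (k : ℕ) < j → i ≤ ((z k : Fin n) : ℕ)) : permRank z i j = 0 := by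
  rw [permRank, Finset.card_eq_zero, Finset.filter_eq_empty_iff]
  rintro k - ⟨h1, h2⟩
  have := h k h1
  omega

theorem key_induction {n : ℕ} (z : Equiv.Perm (Fin n)) (hz : z * z = 1)
    (A : Matrix (Fin n) (Fin n) ℂ)
    (H : ∀ a b : Fin n, b < z a → a < z b →
      cornerRank A a (b + 1) ≤ permRank z a (b + 1) →
      cornerRank A (a + 1) (b + 1) ≤ permRank z (a + 1) (b + 1)) :
    ∀ i j : ℕ, i ≤ n → j ≤ n → cornerRank A i j ≤ permRank z i j := by
  have hzz : ∀ a, z (z a) = a := fun a => by simpa using congrArg (fun w => w a) hz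
  intro i
  induction i with
  | zero =>
    intro j hi hj
    rw [(cornerRank_zero A 0 j hi hj).2 (by intro a b ha; omega)]
    exact Nat.zero_le _
  | succ i ihi =>
    intro j hi hj
    induction j with
    | zero =>
      rw [(cornerRank_zero A (i+1) 0 hi hj).2 (by intro a b ha hb; omega)]
      exact Nat.zero_le _
    | succ j ihj =>
      have h1 := ihi (j + 1) (by omega) hj
      have h2 := ihj (by omega)
      let a : Fin n := ⟨i, hi⟩
      let b : Fin n := ⟨j, hj⟩
      by_cases ha : b < z a
      · by_cases hb : a < z b
        · exact H a b ha hb h1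
        · have hb' : ((z b : Fin n) : ℕ) ≤ i := not_lt.1 hb
          have := permRank_lt z (i := i + 1) (i' := i + 1) (j := j) (j' := j + 1) le_rfl
            (by omega) b (Nat.lt_succ_self j) (by omega) (by simp [b])
          have := cornerRank_succ_right A (i + 1) j hi hj
          omega
      · have ha' : ((z a : Fin n) : ℕ) ≤ j := not_lt.1 ha
        have := permRank_lt z (i := i) (i' := i + 1) (j := j + 1) (j' := j + 1) (by omega)
            le_rfl (z a) (by omega) (by rw [hzz]; exact Nat.lt_succ_self i)
            (by rw [hzz]; simp [a])
        have := cornerRank_succ_left A i (j + 1) hi hj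
        omega

theorem even_rank_skew {m : ℕ} (B : Matrix (Fin m) (Fin m) ℂ) (hB : B.transpose = -B) :
    Even B.rank := by
  obtain ⟨r, hr⟩ : ∃ r, B.rank = r := ⟨_, rfl⟩
  have hr' := hr
  rw [Matrix.rank_eq_finrank_span_row] at hr'
  obtain ⟨f, hf, hspan⟩ : ∃ f : Fin r → (Fin m → ℂ), (∀ i, f i ∈ Set.range B.row) ∧
      Submodule.span ℂ (Set.range f) = Submodule.span ℂ (Set.range B.row) := by
    subst hr'
    obtain ⟨f, h1, h2, _⟩ := Submodule.exists_fun_fin_finrank_span_eq ℂ (Set.range B.row)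
    exact ⟨f, h1, h2⟩
  choose g hg using hf
  have hX : ∀ a, ∃ c : Fin r → ℂ, ∑ i, c i • f i = B.row a := by
    intro a
    rw [← Submodule.mem_span_range_iff_exists_fun, hspan]
    exact Submodule.subset_span ⟨a, rfl⟩
  choose X hX using hX
  have hXB : B = Matrix.of X * B.submatrix g id := by
    ext a b
    have := congrFun (hX a) b
    simp only [Finset.sum_apply, Pi.smul_apply, smul_eq_mul, ← hg] at this
    rw [Matrix.mul_apply]
    exact this.symm
  have hsk : ∀ a b, B a b = - B b a := fun a b => by
    have := congrFun (congrFun hB b) a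
    simpa using this
  set C := B.submatrix g g with hC
  have hCB : B.submatrix g id = C * (Matrix.of X).transpose := by
    ext a b
    have h := congrFun (congrFun hXB b) (g a)
    rw [Matrix.mul_apply] at h ⊢
    rw [Matrix.submatrix_apply, id, hsk, h, ← Finset.sum_neg_distrib]
    refine Finset.sum_congr rfl fun i _ => ?_
    simp only [hC, Matrix.submatrix_apply, id, Matrix.transpose_apply, Matrix.of_apply]
    rw [hsk (g i) (g a)]
    ring
  have hle : r ≤ C.rank := by
    refine hr.symm.le.trans ?_
    have hfac : B = Matrix.of X * (C * (Matrix.of X).transpose) := hXB.trans (by rw [← hCB])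
    calc B.rank = (Matrix.of X * (C * (Matrix.of X).transpose)).rank := congrArg Matrix.rank hfac
      _ ≤ _ := (Matrix.rank_mul_le_right _ _).trans (Matrix.rank_mul_le_left _ _)
  have hdet : C.det ≠ 0 := by
    intro h0
    obtain ⟨v, hv, hv0⟩ := Matrix.exists_mulVec_eq_zero_iff.2 h0
    have h3 := LinearMap.finrank_range_add_finrank_ker C.mulVecLin
    have h4 : 0 < Module.finrank ℂ (LinearMap.ker C.mulVecLin) := by
      rw [Module.finrank_pos_iff_exists_ne_zero]
      exact ⟨⟨v, by simpa using hv0⟩, by simpa [Subtype.ext_iff] using hv⟩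
    have h5 : C.rank = Module.finrank ℂ (LinearMap.range C.mulVecLin) := rfl
    simp only [Module.finrank_fin_fun] at h3
    omega
  rw [hr]
  by_contra hodd
  rw [Nat.not_even_iff_odd] at hodd
  have hCt : C.transpose = -C := by
    ext a b
    simp only [hC, Matrix.transpose_apply, Matrix.submatrix_apply, Matrix.neg_apply]
    exact hsk _ _
  have h6 : C.det = - C.det := by
    conv_lhs => rw [← Matrix.det_transpose, hCt, Matrix.det_neg]
    simp [hodd.neg_one_pow]
  exact hdet (self_eq_neg.1 h6)

theorem even_permRank {n : ℕ} (z : Equiv.Perm (Fin n)) (hz : IsFPF z) (m : ℕ) :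
    Even (permRank z m m) := by
  obtain ⟨hz, hf⟩ := hz
  have hzz : ∀ a, z (z a) = a := fun a => by simpa using congrArg (fun w => w a) hz
  have : ∑ k ∈ (Finset.univ.filter (fun k : Fin n => (k : ℕ) < m ∧ ((z k : Fin n) : ℕ) < m)),
      (1 : ZMod 2) = 0 := by
    refine Finset.sum_involution (fun a _ => z a) ?_ ?_ ?_ ?_
    · intros; decide
    · intro a _ _; exact hf a
    · intro a ha
      simp only [Finset.mem_filter, Finset.mem_univ, true_and] at ha ⊢
      rw [hzz]
      exact ha.symm
    · intro a _; exact hzz a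
  rw [Finset.sum_const, nsmul_one] at this
  exact (ZMod.natCast_eq_zero_iff_even).1 this

theorem shape_mono {k : ℕ} {μ : Fin k → ℕ} (hμ : StrictAnti μ) :
    ∀ (d b : ℕ) (h : b + d < k), b + d + μ ⟨b + d, h⟩ ≤ b + μ ⟨b, by omega⟩ := by
  intro d
  induction d with
  | zero => intro b h; simp
  | succ d ih =>
    intro b h
    have h1 := ih b (by omega)
    have h2 : μ ⟨b + (d + 1), h⟩ < μ ⟨b + d, by omega⟩ := hμ (by simp [Fin.lt_def])
    omega

theorem shape_mono' {k : ℕ} {μ : Fin k → ℕ} (hμ : StrictAnti μ) (b c : ℕ) (hc : c < k)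
    (hbc : b ≤ c) : c + μ ⟨c, hc⟩ ≤ b + μ ⟨b, by omega⟩ := by
  obtain ⟨d, rfl⟩ := Nat.exists_eq_add_of_le hbc
  exact shape_mono hμ d b hc

theorem statement6 (n : ℕ) :
    (∀ z : Equiv.Perm (Fin n), z * z = 1 →
      ∀ (k : ℕ) (μ : Fin k → ℕ), StrictAnti μ → (∀ j, 0 < μ j) →
        (∀ p : Fin n × Fin n, p ∈ DO n z ↔
          ∃ h : (p.2 : ℕ) < k,
            (p.2 : ℕ) ≤ (p.1 : ℕ) ∧ (p.1 : ℕ) < (p.2 : ℕ) + μ ⟨(p.2 : ℕ), h⟩) →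
        ∀ A : Matrix (Fin n) (Fin n) ℂ, A.transpose = A →
          ((∀ i j : ℕ, i ≤ n → j ≤ n → cornerRank A i j ≤ permRank z i j) ↔
            ∀ p ∈ DO n z, A p.1 p.2 = 0)) ∧
    (n % 2 = 0 → ∀ z : Equiv.Perm (Fin n), IsFPF z →
      ∀ (k : ℕ) (μ : Fin k → ℕ), StrictAnti μ → (∀ j, 0 < μ j) →
        (∀ p : Fin n × Fin n, p ∈ DSp n z ↔
          ∃ h : (p.2 : ℕ) < k,
            (p.2 : ℕ) + 1 ≤ (p.1 : ℕ) ∧ (p.1 : ℕ) ≤ (p.2 : ℕ) + μ ⟨(p.2 : ℕ), h⟩) →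
        ∀ A : Matrix (Fin n) (Fin n) ℂ, A.transpose = -A →
          ((∀ i j : ℕ, i ≤ n → j ≤ n → cornerRank A i j ≤ permRank z i j) ↔
            ∀ p ∈ DSp n z, A p.1 p.2 = 0)) := by
  constructor
  · intro z hz k μ hμ _ hD A hA
    have hzz : ∀ a, z (z a) = a := fun a => by simpa using congrArg (fun w => w a) hz
    have hsym : ∀ a b, A a b = A b a := fun a b => (congrFun (congrFun hA a) b).symm
    -- the diagram is closed under going to the north-west
    have hdown : ∀ a b c d : Fin n, (a, b) ∈ DO n z → c ≤ a → d ≤ b →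
        (c, d) ∈ DO n z ∨ (d, c) ∈ DO n z := by
      intro a b c d h hc hd
      rw [hD] at h
      obtain ⟨hk, h1, h2⟩ := h
      simp only [Fin.le_def] at hc hd h1 h2 hk
      rcases le_total (d : ℕ) (c : ℕ) with hdc | hdc
      · left
        rw [hD]
        have := shape_mono' hμ d b hk hd
        exact ⟨by simp only; omega, hdc, by simp only; omega⟩
      · right
        rw [hD]
        have := shape_mono' hμ c b hk (by omega)
        exact ⟨by simp only; omega, hdc, by simp only; omega⟩
    constructor
    · rintro H ⟨a, b⟩ hp
      have h0 := H (a + 1) (b + 1) a.2 b.2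
      rw [permRank_zero, Nat.le_zero, cornerRank_zero _ _ _ a.2 b.2] at h0
      · exact h0 a b (Nat.lt_succ_self _) (Nat.lt_succ_self _)
      · intro x hx
        by_contra hlt
        rcases hdown a b (z x) x hp (Nat.lt_succ_iff.1 (not_le.1 hlt)) (Nat.lt_succ_iff.1 hx)
          with h | h
        · exact lt_irrefl _ ((mem_DO' z hz _).1 h).2.2
        · exact lt_irrefl _ ((mem_DO' z hz _).1 h).1
    · intro H
      refine key_induction z hz A ?_
      intro a b h1 h2 _
      rw [(cornerRank_zero A _ _ a.2 b.2).2]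
      · exact Nat.zero_le _
      intro c d hc hd
      have hc' : c ≤ a := Nat.lt_succ_iff.1 hc
      have hd' : d ≤ b := Nat.lt_succ_iff.1 hd
      have : (c, d) ∈ DO n z ∨ (d, c) ∈ DO n z := by
        rcases le_total b a with hba | hba
        · exact hdown a b c d ((mem_DO' z hz _).2 ⟨h1, hba, h2⟩) hc' hd'
        · exact (hdown b a d c ((mem_DO' z hz _).2 ⟨h2, hba, h1⟩) hd' hc').symm
      rcases this with h | h
      · exact H _ h
      · rw [hsym]; exact H _ h
  · intro _ z hfpf k μ hμ _ hD A hA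
    have hz := hfpf.1
    have hzz : ∀ a, z (z a) = a := fun a => by simpa using congrArg (fun w => w a) hz
    have hsk : ∀ a b, A a b = - A b a := fun a b => congrFun (congrFun hA b) a
    have hdown : ∀ a b c d : Fin n, (a, b) ∈ DSp n z → c ≤ a → d ≤ b →
        c = d ∨ (c, d) ∈ DSp n z ∨ (d, c) ∈ DSp n z := by
      intro a b c d h hc hd
      rw [hD] at h
      obtain ⟨hk, h1, h2⟩ := h
      simp only [Fin.le_def] at hc hd h1 h2 hk
      rcases lt_trichotomy (d : ℕ) (c : ℕ) with hdc | hdc | hdc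
      · right; left
        rw [hD]
        have := shape_mono' hμ d b hk hd
        exact ⟨by simp only; omega, hdc, by simp only; omega⟩
      · left; exact Fin.ext hdc.symm
      · right; right
        rw [hD]
        have := shape_mono' hμ c b hk (by omega)
        exact ⟨by simp only; omega, hdc, by simp only; omega⟩
    constructor
    · rintro H ⟨a, b⟩ hp
      have h0 := H (a + 1) (b + 1) a.2 b.2
      rw [permRank_zero, Nat.le_zero, cornerRank_zero _ _ _ a.2 b.2] at h0
      · exact h0 a b (Nat.lt_succ_self _) (Nat.lt_succ_self _)
      · intro x hx
        by_contra hlt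
        rcases hdown a b (z x) x hp (Nat.lt_succ_iff.1 (not_le.1 hlt)) (Nat.lt_succ_iff.1 hx)
          with h | h | h
        · exact hfpf.2 x h
        · exact lt_irrefl _ ((mem_DSp' z hz _).1 h).2.2
        · exact lt_irrefl _ ((mem_DSp' z hz _).1 h).1
    · intro H
      refine key_induction z hz A ?_
      intro a b h1 h2 hr
      by_cases hab : a = b
      · subst hab
        have e1 : Even (cornerRank A (a + 1) (a + 1)) := by
          rw [cornerRank_eq A _ _ a.2 a.2]
          apply even_rank_skew
          ext x y
          exact hsk _ _
        have e2 := even_permRank z hfpf (a + 1)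
        have h3 := cornerRank_succ_left A a (a + 1) a.2 a.2
        have h4 : permRank z a (a + 1) ≤ permRank z (a + 1) (a + 1) :=
          permRank_mono z (by omega) le_rfl
        obtain ⟨x, hx⟩ := e1
        obtain ⟨y, hy⟩ := e2
        omega
      rw [(cornerRank_zero A _ _ a.2 b.2).2]
      · exact Nat.zero_le _
      intro c d hc hd
      have hc' : c ≤ a := Nat.lt_succ_iff.1 hc
      have hd' : d ≤ b := Nat.lt_succ_iff.1 hd
      have : c = d ∨ (c, d) ∈ DSp n z ∨ (d, c) ∈ DSp n z := by
        rcases lt_or_gt_of_ne hab with hba | hba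
        · have := hdown b a d c ((mem_DSp' z hz _).2 ⟨h2, hba, h1⟩) hd' hc'
          rcases this with h | h | h
          · exact Or.inl h.symm
          · exact Or.inr (Or.inr h)
          · exact Or.inr (Or.inl h)
        · exact hdown a b c d ((mem_DSp' z hz _).2 ⟨h1, hba, h2⟩) hc' hd'
      rcases this with h | h | h
      · subst h
        exact self_eq_neg.1 (hsk c c)
      · exact H _ h
      · rw [hsk, H _ h, neg_zero]
end
end
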